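/- arXiv:1012.5329 — 2 statements merged into one kernel-verified Lean document; each statement's English description precedes it below -/
import Mathlib

section
/- Let C be a clutter with edge ideal I(C) ⊂ R = K[x_1,...,x_n], and let f_1,...,f_r be an induced matching of C with d_i = |f_i| for i = 1,...,r. Then (sum_{i=1}^r d_i) - r ≤ reg(R/I(C)). In particular, for any graph G, the induced matching number im(G) satisfies im(G) ≤ reg(R/I(G)). -/
open MvPolynomial

/-- A clutter on the vertex set `Fin n`: a family of edges, none containing another. -/
structure Clutter (n : ℕ) : Type where
  edges : Finset (Finset (Fin n))
  antichain : ∀ e ∈ edges, ∀ f ∈ edges, e ⊆ f → e = f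

/-- The squarefree monomial `∏_{i ∈ e} xᵢ` associated to a set of vertices. -/
noncomputable def edgeMonomial (K : Type) [Field K] {n : ℕ} (e : Finset (Fin n)) :
    MvPolynomial (Fin n) K :=
  ∏ i ∈ e, X i

/-- The edge ideal of a clutter. -/
noncomputable def Clutter.edgeIdeal (K : Type) [Field K] {n : ℕ} (C : Clutter n) :
    Ideal (MvPolynomial (Fin n) K) :=
  Ideal.span (edgeMonomial K '' ↑C.edges)

/-- A finite graded free resolution of `R/I`, where `R = K[x₁,…,xₙ]`.
`F_i = ⊕_j R(-tw i j)` with `rk i` summands, differentials `δ i : F_{i+1} → F_i`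
given by matrices with homogeneous entries of the correct degrees, exact, and
augmented by a degree-preserving surjection `F₀ → R/I`. -/
structure GFR (n : ℕ) (K : Type) [Field K] (I : Ideal (MvPolynomial (Fin n) K)) : Type where
  len : ℕ
  rk : ℕ → ℕ
  rk_zero : ∀ i, len < i → rk i = 0
  tw : (i : ℕ) → Fin (rk i) → ℕ
  δ : (i : ℕ) → ((Fin (rk (i + 1)) → MvPolynomial (Fin n) K) →ₗ[MvPolynomial (Fin n) K]
        (Fin (rk i) → MvPolynomial (Fin n) K))
  δ_homog : ∀ (i : ℕ) (k : Fin (rk (i + 1))) (j : Fin (rk i)),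
      δ i (Pi.single k 1) j = 0 ∨
        (tw i j ≤ tw (i + 1) k ∧ (δ i (Pi.single k 1) j).IsHomogeneous (tw (i + 1) k - tw i j))
  aug : (Fin (rk 0) → MvPolynomial (Fin n) K) →ₗ[MvPolynomial (Fin n) K] MvPolynomial (Fin n) K
  aug_homog : ∀ j : Fin (rk 0), (aug (Pi.single j 1)).IsHomogeneous (tw 0 j)
  aug_surj : ∀ r : MvPolynomial (Fin n) K, ∃ x, r - aug x ∈ I
  exact_zero : LinearMap.range (δ 0) = Submodule.comap aug I
  exact_succ : ∀ i : ℕ, LinearMap.range (δ (i + 1)) = LinearMap.ker (δ i)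

/-- The Castelnuovo–Mumford regularity of `R/I`:
the least `r` such that `R/I` admits a (finite) graded free resolution all of whose
`i`-th twists are at most `r + i`.  (This value is attained by the minimal graded free
resolution, so it equals `max { j - i : b_{ij}(R/I) ≠ 0 }`.) -/
noncomputable def regR {n : ℕ} {K : Type} [Field K] (I : Ideal (MvPolynomial (Fin n) K)) : ℕ :=
  sInf { r : ℕ | ∃ F : GFR n K I, ∀ (i : ℕ) (j : Fin (F.rk i)), F.tw i j ≤ r + i }

/-- An induced matching of a clutter: pairwise disjoint edges `f 0, …, f (r-1)` such
that the only edges of the clutter contained in their union are the `f i`. -/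
def Clutter.IsInducedMatching {n : ℕ} (C : Clutter n) {r : ℕ}
    (f : Fin r → Finset (Fin n)) : Prop :=
  (∀ i, f i ∈ C.edges) ∧
  (∀ i j, i ≠ j → Disjoint (f i) (f j)) ∧
  (∀ e ∈ C.edges, e ⊆ Finset.univ.biUnion f → ∃ i, e = f i)

/-- The induced matching number of a clutter. -/
noncomputable def imClutter {n : ℕ} (C : Clutter n) : ℕ :=
  sSup { r : ℕ | ∃ f : Fin r → Finset (Fin n), C.IsInducedMatching f }

/-!
Chain maps between two graded free resolutions `F`, `G` of `R/I` that lift the identity compose to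
a self-map of `F` homotopic to the identity. If the basis vector `k` of `F` meets no unit entry of
the differentials, the constant coefficient of the homotopy at `k` vanishes, so the composite has
constant coefficient `1` there and must factor through a basis vector of `G` of the same twist.
Hence the twist of `k` is at most `reg (R/I)` plus its homological degree.

For an induced matching `f₁, …, f_r`, the subset `{f₁, …, f_r}` of the edges is such a basis vector
of the Taylor resolution of `I(C)`: disjointness prevents unit entries leaving it, inducedness
prevents unit entries arriving at it. It lies in homological degree `r` and its twist is `∑ |fᵢ|`.
-/

attribute [local instance] MvPolynomial.gradedAlgebra

section GradedFreeModules

variable {σ R ι κ : Type*} [CommRing R]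

/-- The degree-`d` part of a polynomial regarded as an element of the twisted module `S(-t)`,
where `S` is the polynomial ring. -/
noncomputable def twistedComponent (t d : ℕ) (p : MvPolynomial σ R) : MvPolynomial σ R :=
  if t ≤ d then homogeneousComponent (d - t) p else 0

lemma coeff_twistedComponent (t d : ℕ) (p : MvPolynomial σ R) (a : σ →₀ ℕ) :
    coeff a (twistedComponent t d p) = if a.degree + t = d then coeff a p else 0 := by
  unfold twistedComponent
  split_ifs <;> simp only [coeff_homogeneousComponent, coeff_zero] <;> grind

lemma twistedComponent_idem (t d : ℕ) (p : MvPolynomial σ R) :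
    twistedComponent t d (twistedComponent t d p) = twistedComponent t d p := by
  ext a
  simp only [coeff_twistedComponent]
  grind

lemma twistedComponent_sum (t d : ℕ) (s : Finset κ) (p : κ → MvPolynomial σ R) :
    twistedComponent t d (∑ k ∈ s, p k) = ∑ k ∈ s, twistedComponent t d (p k) := by
  unfold twistedComponent
  split_ifs <;> simp

lemma twistedComponent_eq_self_of_isHomogeneous {t d : ℕ} {p : MvPolynomial σ R}
    (htd : t ≤ d) (hp : p.IsHomogeneous (d - t)) : twistedComponent t d p = p := by
  rw [twistedComponent, if_pos htd, homogeneousComponent_eq_self hp]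

lemma twistedComponent_mul {t' t : ℕ} {q : MvPolynomial σ R} (hq : twistedComponent t' t q = q)
    (d : ℕ) (p : MvPolynomial σ R) :
    twistedComponent t' d (p * q) = twistedComponent t d p * q := by
  classical
  ext c
  rw [coeff_twistedComponent, coeff_mul, coeff_mul, Finset.ite_sum_zero]
  refine Finset.sum_congr rfl fun ab hab => ?_
  have hdegree : ab.1.degree + ab.2.degree = c.degree := by
    rw [← Finset.HasAntidiagonal.mem_antidiagonal.mp hab, map_add]
  have hcoeff : coeff ab.2 q = if ab.2.degree + t' = t then coeff ab.2 q else 0 := by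
    rw [← coeff_twistedComponent, hq]
  rw [coeff_twistedComponent, hcoeff]
  grind

/-- The degree-`d` component of a vector of the graded free module `⨁ j, S(-w j)`. -/
noncomputable def gradedComponent (w : ι → ℕ) (d : ℕ) (v : ι → MvPolynomial σ R) :
    ι → MvPolynomial σ R :=
  fun j => twistedComponent (w j) d (v j)

lemma gradedComponent_idem (w : ι → ℕ) (d : ℕ) (v : ι → MvPolynomial σ R) :
    gradedComponent w d (gradedComponent w d v) = gradedComponent w d v :=
  funext fun _ => twistedComponent_idem _ _ _

lemma gradedComponent_single [DecidableEq ι] (w : ι → ℕ) (k : ι) :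
    gradedComponent w (w k) (Pi.single k (1 : MvPolynomial σ R)) = Pi.single k 1 := by
  funext j
  rcases eq_or_ne j k with rfl | hjk
  · simpa [gradedComponent] using twistedComponent_eq_self_of_isHomogeneous (le_refl (w j))
      (by simpa using isHomogeneous_one σ R)
  · simp [gradedComponent, twistedComponent, hjk]

/-- A degree-preserving linear map `⨁ k, S(-w k) → ⨁ j, S(-w' j)` of graded free modules,
expressed as compatibility with the projections to graded components. -/
def IsGradedMap (w : ι → ℕ) (w' : κ → ℕ)
    (f : (ι → MvPolynomial σ R) →ₗ[MvPolynomial σ R] (κ → MvPolynomial σ R)) : Prop :=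
  ∀ d v, f (gradedComponent w d v) = gradedComponent w' d (f v)

lemma IsGradedMap.comp {μ : Type*} {w : ι → ℕ} {w' : κ → ℕ} {w'' : μ → ℕ}
    {g : (κ → MvPolynomial σ R) →ₗ[MvPolynomial σ R] (μ → MvPolynomial σ R)}
    {f : (ι → MvPolynomial σ R) →ₗ[MvPolynomial σ R] (κ → MvPolynomial σ R)}
    (hg : IsGradedMap w' w'' g) (hf : IsGradedMap w w' f) : IsGradedMap w w'' (g ∘ₗ f) :=
  fun d v => (congrArg g (hf d v)).trans (hg d (f v))

section Bases

variable [DecidableEq ι]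

lemma map_eq_sum_single [Fintype ι] {A M : Type*} [CommSemiring A] [AddCommMonoid M] [Module A M]
    (f : (ι → A) →ₗ[A] M) (v : ι → A) : f v = ∑ k, v k • f (Pi.single k 1) := by
  conv_lhs => rw [pi_eq_sum_univ' v, map_sum]
  simp only [map_smul]

lemma map_gradedComponent_of_single [Finite ι] {w : ι → ℕ} {t : ℕ}
    {f : (ι → MvPolynomial σ R) →ₗ[MvPolynomial σ R] MvPolynomial σ R}
    (hf : ∀ k, twistedComponent t (w k) (f (Pi.single k 1)) = f (Pi.single k 1))
    (d : ℕ) (v : ι → MvPolynomial σ R) :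
    f (gradedComponent w d v) = twistedComponent t d (f v) := by
  cases nonempty_fintype ι
  rw [map_eq_sum_single f, map_eq_sum_single f v, twistedComponent_sum]
  exact Finset.sum_congr rfl fun k _ => (twistedComponent_mul (hf k) d (v k)).symm

lemma isGradedMap_of_single [Finite ι] {w : ι → ℕ} {w' : κ → ℕ}
    {f : (ι → MvPolynomial σ R) →ₗ[MvPolynomial σ R] (κ → MvPolynomial σ R)}
    (hf : ∀ k, gradedComponent w' (w k) (f (Pi.single k 1)) = f (Pi.single k 1)) :
    IsGradedMap w w' f := fun d v => funext fun j =>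
  map_gradedComponent_of_single
    (f := (LinearMap.proj j : (κ → MvPolynomial σ R) →ₗ[MvPolynomial σ R] _) ∘ₗ f)
    (fun k => congrFun (hf k) j) d v

lemma IsGradedMap.eq_of_constantCoeff_ne_zero {w : ι → ℕ} {w' : κ → ℕ}
    {f : (ι → MvPolynomial σ R) →ₗ[MvPolynomial σ R] (κ → MvPolynomial σ R)}
    (hf : IsGradedMap w w' f) {k : ι} {j : κ}
    (h : constantCoeff (f (Pi.single k 1) j) ≠ 0) : w' j = w k := by
  by_contra hne
  rw [← gradedComponent_single w k, hf] at h
  simp [constantCoeff_eq, gradedComponent, coeff_twistedComponent, hne] at h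

variable [Fintype ι]

lemma constantCoeff_map_apply
    (f : (ι → MvPolynomial σ R) →ₗ[MvPolynomial σ R] (κ → MvPolynomial σ R))
    (v : ι → MvPolynomial σ R) (j : κ) :
    constantCoeff (f v j) =
      ∑ k, constantCoeff (v k) * constantCoeff (f (Pi.single k 1) j) := by
  rw [map_eq_sum_single f v, Finset.sum_apply, map_sum]
  simp only [Pi.smul_apply, smul_eq_mul, map_mul]

/-- The degree-preserving part of a linear map `⨁ k, S(-w k) → ⨁ j, S(-w' j)`. -/
noncomputable def gradedPart (w : ι → ℕ) (w' : κ → ℕ)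
    (f : (ι → MvPolynomial σ R) →ₗ[MvPolynomial σ R] (κ → MvPolynomial σ R)) :
    (ι → MvPolynomial σ R) →ₗ[MvPolynomial σ R] (κ → MvPolynomial σ R) :=
  Fintype.linearCombination (MvPolynomial σ R) fun k =>
    gradedComponent w' (w k) (f (Pi.single k 1))

lemma gradedPart_single (w : ι → ℕ) (w' : κ → ℕ)
    (f : (ι → MvPolynomial σ R) →ₗ[MvPolynomial σ R] (κ → MvPolynomial σ R)) (k : ι) :
    gradedPart w w' f (Pi.single k 1) = gradedComponent w' (w k) (f (Pi.single k 1)) := by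
  rw [gradedPart, Fintype.linearCombination_apply_single, one_smul]

lemma isGradedMap_gradedPart (w : ι → ℕ) (w' : κ → ℕ)
    (f : (ι → MvPolynomial σ R) →ₗ[MvPolynomial σ R] (κ → MvPolynomial σ R)) :
    IsGradedMap w w' (gradedPart w w' f) :=
  isGradedMap_of_single fun k => by rw [gradedPart_single, gradedComponent_idem]

end Bases

lemma exists_lift_of_forall_mem_range {A P N M : Type*} [Ring A] [AddCommGroup P] [Module A P]
    [Module.Projective A P] [AddCommGroup N] [Module A N] [AddCommGroup M] [Module A M]
    (g : N →ₗ[A] M) (f : P →ₗ[A] M) (hf : ∀ v, f v ∈ LinearMap.range g) :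
    ∃ c : P →ₗ[A] N, ∀ v, g (c v) = f v := by
  obtain ⟨c, hc⟩ := Module.projective_lifting_property g.rangeRestrict (f.codRestrict _ hf)
    g.surjective_rangeRestrict
  exact ⟨c, fun v => congrArg Subtype.val (LinearMap.congr_fun hc v)⟩

lemma exists_graded_lift [Finite ι] {μ : Type*} {w : ι → ℕ} {w' : κ → ℕ} {w'' : μ → ℕ}
    {g : (κ → MvPolynomial σ R) →ₗ[MvPolynomial σ R] (μ → MvPolynomial σ R)}
    {f : (ι → MvPolynomial σ R) →ₗ[MvPolynomial σ R] (μ → MvPolynomial σ R)}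
    (hg : IsGradedMap w' w'' g) (hf : IsGradedMap w w'' f)
    (hfg : ∀ v, f v ∈ LinearMap.range g) :
    ∃ c, IsGradedMap w w' c ∧ ∀ v, g (c v) = f v := by
  classical
  cases nonempty_fintype ι
  obtain ⟨c, hc⟩ := exists_lift_of_forall_mem_range g f hfg
  refine ⟨gradedPart w w' c, isGradedMap_gradedPart w w' c, fun v => ?_⟩
  have hsingle (k : ι) : g (gradedPart w w' c (Pi.single k 1)) = f (Pi.single k 1) := by
    rw [gradedPart_single, hg, hc, ← hf, gradedComponent_single]
  rw [← LinearMap.comp_apply, map_eq_sum_single (g ∘ₗ _), map_eq_sum_single f]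
  simp only [LinearMap.comp_apply, hsingle]

end GradedFreeModules

lemma exists_dependent_seq {X : ℕ → Type*} {P : ∀ i, X i → Prop}
    {r : ∀ i, X i → X (i + 1) → Prop} {x₀ : X 0} (h₀ : P 0 x₀)
    (step : ∀ i x, P i x → ∃ y, P (i + 1) y ∧ r i x y) :
    ∃ s : ∀ i, X i, s 0 = x₀ ∧ (∀ i, P i (s i)) ∧ ∀ i, r i (s i) (s (i + 1)) := by
  choose next hP hr using step
  let s (i : ℕ) : {x : X i // P i x} :=
    Nat.rec ⟨x₀, h₀⟩ (fun i x => ⟨next i x.1 x.2, hP i x.1 x.2⟩) i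
  exact ⟨fun i => (s i).1, rfl, fun i => (s i).2, fun i => hr i (s i).1 (s i).2⟩

namespace GFR

variable {n : ℕ} {K : Type} [Field K] {I : Ideal (MvPolynomial (Fin n) K)}

lemma mem_range_δ_zero (F : GFR n K I) {x : Fin (F.rk 0) → MvPolynomial (Fin n) K} :
    x ∈ LinearMap.range (F.δ 0) ↔ F.aug x ∈ I := by
  rw [F.exact_zero, Submodule.mem_comap]

lemma mem_range_δ_succ (F : GFR n K I) {i : ℕ}
    {x : Fin (F.rk (i + 1)) → MvPolynomial (Fin n) K} :
    x ∈ LinearMap.range (F.δ (i + 1)) ↔ F.δ i x = 0 := by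
  rw [F.exact_succ, LinearMap.mem_ker]

lemma δ_δ (F : GFR n K I) (i : ℕ) (x : Fin (F.rk (i + 1 + 1)) → MvPolynomial (Fin n) K) :
    F.δ i (F.δ (i + 1) x) = 0 :=
  F.mem_range_δ_succ.mp ⟨x, rfl⟩

lemma isGradedMap_δ (F : GFR n K I) (i : ℕ) : IsGradedMap (F.tw (i + 1)) (F.tw i) (F.δ i) := by
  refine isGradedMap_of_single fun k => funext fun j => ?_
  rcases F.δ_homog i k j with hzero | ⟨hle, hhom⟩
  · simp [gradedComponent, twistedComponent, hzero]
  · exact twistedComponent_eq_self_of_isHomogeneous hle hhom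

lemma aug_gradedComponent (F : GFR n K I) (d : ℕ) (v : Fin (F.rk 0) → MvPolynomial (Fin n) K) :
    F.aug (gradedComponent (F.tw 0) d v) = homogeneousComponent d (F.aug v) :=
  map_gradedComponent_of_single (t := 0)
    (fun k => twistedComponent_eq_self_of_isHomogeneous (Nat.zero_le _) (F.aug_homog k)) d v

/-- A degree-preserving chain map between graded free resolutions of `R/I` that lifts the
identity of `R/I`. -/
structure Hom (F G : GFR n K I) : Type where
  map (i : ℕ) : (Fin (F.rk i) → MvPolynomial (Fin n) K) →ₗ[MvPolynomial (Fin n) K]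
    (Fin (G.rk i) → MvPolynomial (Fin n) K)
  isGradedMap_map (i : ℕ) : IsGradedMap (F.tw i) (G.tw i) (map i)
  aug_sub_mem (v) : F.aug v - G.aug (map 0 v) ∈ I
  comm (i : ℕ) (v) : G.δ i (map (i + 1) v) = map i (F.δ i v)

/-- The identity chain map. -/
noncomputable def Hom.id (F : GFR n K I) : F.Hom F where
  map _ := LinearMap.id
  isGradedMap_map _ _ _ := rfl
  aug_sub_mem v := by simp
  comm _ _ := rfl

/-- The composite of two chain maps. -/
noncomputable def Hom.comp {F G H : GFR n K I} (ψ : G.Hom H) (φ : F.Hom G) : F.Hom H where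
  map i := ψ.map i ∘ₗ φ.map i
  isGradedMap_map i := (ψ.isGradedMap_map i).comp (φ.isGradedMap_map i)
  aug_sub_mem v := by
    simpa using Ideal.add_mem _ (φ.aug_sub_mem v) (ψ.aug_sub_mem (φ.map 0 v))
  comm i v := by simp only [LinearMap.comp_apply, ψ.comm, φ.comm]

lemma exists_graded_lift_aug (hI : I.IsHomogeneous (homogeneousSubmodule (Fin n) K))
    (F G : GFR n K I) :
    ∃ c, IsGradedMap (F.tw 0) (G.tw 0) c ∧ ∀ v, F.aug v - G.aug (c v) ∈ I := by
  obtain ⟨c, hc⟩ := exists_lift_of_forall_mem_range (I.mkQ ∘ₗ G.aug) (I.mkQ ∘ₗ F.aug) fun v => by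
    obtain ⟨x, hx⟩ := G.aug_surj (F.aug v)
    exact ⟨x, ((Submodule.Quotient.eq I).mpr hx).symm⟩
  refine ⟨gradedPart _ _ c, isGradedMap_gradedPart _ _ c, fun v => ?_⟩
  have hsingle (k) :
      F.aug (Pi.single k 1) - G.aug (gradedPart (F.tw 0) (G.tw 0) c (Pi.single k 1)) ∈ I := by
    rw [gradedPart_single, aug_gradedComponent, ← homogeneousComponent_eq_self (F.aug_homog k),
      ← map_sub]
    exact homogeneousComponent_mem_of_mem hI ((Submodule.Quotient.eq I).mp (hc _).symm) _
  rw [← LinearMap.comp_apply, ← LinearMap.sub_apply, map_eq_sum_single (_ - _)]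
  exact Ideal.sum_mem _ fun k _ => Ideal.mul_mem_left _ _ (hsingle k)

theorem nonempty_hom (hI : I.IsHomogeneous (homogeneousSubmodule (Fin n) K)) (F G : GFR n K I) :
    Nonempty (F.Hom G) := by
  obtain ⟨φ₀, hφ₀, haug⟩ := exists_graded_lift_aug hI F G
  obtain ⟨φ, rfl, hφ, hcomm⟩ := exists_dependent_seq
    (X := fun i => (Fin (F.rk i) → MvPolynomial (Fin n) K) →ₗ[MvPolynomial (Fin n) K]
      (Fin (G.rk i) → MvPolynomial (Fin n) K))
    (P := fun i f => IsGradedMap (F.tw i) (G.tw i) f ∧ ∀ v, f (F.δ i v) ∈ LinearMap.range (G.δ i))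
    (r := fun i f f' => ∀ v, G.δ i (f' v) = f (F.δ i v)) (x₀ := φ₀)
    ⟨hφ₀, fun v => by
      have hmem := I.sub_mem (F.mem_range_δ_zero.mp ⟨v, rfl⟩) (haug (F.δ 0 v))
      rwa [sub_sub_cancel, ← mem_range_δ_zero] at hmem⟩
    fun i f ⟨hf, hrange⟩ => by
      obtain ⟨f', hf', hcomm⟩ := exists_graded_lift (G.isGradedMap_δ i)
        (hf.comp (F.isGradedMap_δ i)) hrange
      refine ⟨f', ⟨hf', fun v => ?_⟩, hcomm⟩
      rw [mem_range_δ_succ, hcomm, LinearMap.comp_apply, δ_δ, map_zero]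
  exact ⟨⟨φ, fun i => (hφ i).1, haug, hcomm⟩⟩

theorem Hom.exists_homotopy {F G : GFR n K I} (φ ψ : F.Hom G) :
    ∃ h : ∀ i, (Fin (F.rk i) → MvPolynomial (Fin n) K) →ₗ[MvPolynomial (Fin n) K]
        (Fin (G.rk (i + 1)) → MvPolynomial (Fin n) K),
      ∀ i v, G.δ (i + 1) (h (i + 1) v) = φ.map (i + 1) v - ψ.map (i + 1) v - h i (F.δ i v) := by
  obtain ⟨h₀, hh₀⟩ := exists_lift_of_forall_mem_range (G.δ 0) (φ.map 0 - ψ.map 0) fun v => by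
    rw [mem_range_δ_zero, LinearMap.sub_apply, map_sub]
    simpa using I.sub_mem (ψ.aug_sub_mem v) (φ.aug_sub_mem v)
  obtain ⟨h, -, -, hh⟩ := exists_dependent_seq
    (X := fun i => (Fin (F.rk i) → MvPolynomial (Fin n) K) →ₗ[MvPolynomial (Fin n) K]
      (Fin (G.rk (i + 1)) → MvPolynomial (Fin n) K))
    (P := fun i f => ∀ v, G.δ i (φ.map (i + 1) v - ψ.map (i + 1) v - f (F.δ i v)) = 0)
    (r := fun i f f' => ∀ v,
      G.δ (i + 1) (f' v) = φ.map (i + 1) v - ψ.map (i + 1) v - f (F.δ i v)) (x₀ := h₀)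
    (fun v => by simp only [map_sub, φ.comm, ψ.comm, hh₀, LinearMap.sub_apply, sub_self])
    fun i f hf => by
      obtain ⟨f', hf'⟩ := exists_lift_of_forall_mem_range (G.δ (i + 1))
        (φ.map (i + 1) - ψ.map (i + 1) - f ∘ₗ F.δ i) fun v => G.mem_range_δ_succ.mpr (hf v)
      refine ⟨f', fun v => ?_, hf'⟩
      rw [map_sub, map_sub, φ.comm, ψ.comm, hf']
      simp [δ_δ]
  exact ⟨h, hh⟩

/-- The basis vector `k` in homological degree `i + 1` behaves as in a minimal resolution:
neither its image nor any boundary hitting it involves a unit entry at `k`. -/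
def IsMinimalAt (F : GFR n K I) (i : ℕ) (k : Fin (F.rk (i + 1))) : Prop :=
  (∀ j, constantCoeff (F.δ i (Pi.single k 1) j) = 0) ∧
    ∀ l, constantCoeff (F.δ (i + 1) (Pi.single l 1) k) = 0

theorem exists_tw_eq_of_isMinimalAt (hI : I.IsHomogeneous (homogeneousSubmodule (Fin n) K))
    (F G : GFR n K I) {i : ℕ} {k : Fin (F.rk (i + 1))} (hk : F.IsMinimalAt i k) :
    ∃ j, G.tw (i + 1) j = F.tw (i + 1) k := by
  obtain ⟨φ⟩ := nonempty_hom hI F G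
  obtain ⟨ψ⟩ := nonempty_hom hI G F
  obtain ⟨h, hh⟩ := (ψ.comp φ).exists_homotopy (Hom.id F)
  have hboundary (v) : constantCoeff (F.δ (i + 1) v k) = 0 := by
    simp only [constantCoeff_map_apply (F.δ (i + 1)) v, hk.2, mul_zero, Finset.sum_const_zero]
  have hhomotopy : constantCoeff (h i (F.δ i (Pi.single k 1)) k) = 0 := by
    simp only [constantCoeff_map_apply (h i) (F.δ i _), hk.1, zero_mul, Finset.sum_const_zero]
  have hcomp : constantCoeff (ψ.map (i + 1) (φ.map (i + 1) (Pi.single k 1)) k) = 1 := by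
    have hsplit := congrArg (fun v => constantCoeff (v k)) (hh i (Pi.single k 1))
    simp only [Pi.sub_apply, map_sub, hboundary, hhomotopy, Hom.comp, Hom.id, LinearMap.comp_apply,
      LinearMap.id_apply, Pi.single_eq_same, map_one, sub_zero] at hsplit
    exact (sub_eq_zero.mp hsplit.symm)
  rw [constantCoeff_map_apply] at hcomp
  obtain ⟨j, -, hj⟩ := Finset.exists_ne_zero_of_sum_ne_zero (hcomp.trans_ne one_ne_zero)
  exact ⟨j, (φ.isGradedMap_map (i + 1)).eq_of_constantCoeff_ne_zero (left_ne_zero_of_mul hj)⟩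

lemma exists_forall_tw_le (F : GFR n K I) : ∃ r, ∀ i j, F.tw i j ≤ r + i := by
  refine ⟨∑ i ∈ Finset.range (F.len + 1), ∑ j, F.tw i j, fun i j => le_add_right ?_⟩
  have hi : i ∈ Finset.range (F.len + 1) := by
    by_contra hi
    have hrk := F.rk_zero i (by simpa using hi)
    exact (hrk ▸ j).elim0
  exact (Finset.single_le_sum (fun _ _ => Nat.zero_le _) (Finset.mem_univ j)).trans
    (Finset.single_le_sum (f := fun i => ∑ j, F.tw i j) (fun _ _ => Nat.zero_le _) hi)

theorem tw_le_regR_of_isMinimalAt (hI : I.IsHomogeneous (homogeneousSubmodule (Fin n) K))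
    (F : GFR n K I) {i : ℕ} {k : Fin (F.rk (i + 1))} (hk : F.IsMinimalAt i k) :
    F.tw (i + 1) k ≤ regR I + (i + 1) := by
  obtain ⟨r, hr⟩ := F.exists_forall_tw_le
  obtain ⟨G, hG⟩ : ∃ G : GFR n K I, ∀ i j, G.tw i j ≤ regR I + i :=
    Nat.sInf_mem (s := {r | ∃ F : GFR n K I, ∀ i j, F.tw i j ≤ r + i}) ⟨r, F, hr⟩
  obtain ⟨j, hj⟩ := exists_tw_eq_of_isMinimalAt hI F G hk
  exact hj ▸ hG (i + 1) j

end GFR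

section SimplexComplex

variable {ι M : Type*} [LinearOrder ι] [AddCommGroup M]

/-- The sign of the face `s` in the boundary of the simplex `insert g s`. -/
def orientationSign (g : ι) (s : Finset ι) : ℤ :=
  (-1) ^ (s.filter (· < g)).card

lemma orientationSign_smul_smul_self (g : ι) (s : Finset ι) (x : M) :
    orientationSign g s • orientationSign g s • x = x := by
  rw [smul_smul, orientationSign, ← mul_pow, neg_one_mul, neg_neg, one_pow, one_smul]

lemma orientationSign_insert {g h : ι} {s : Finset ι} (hh : h ∉ s) :
    orientationSign g (insert h s) =
      if h < g then -orientationSign g s else orientationSign g s := by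
  unfold orientationSign
  rw [Finset.filter_insert]
  split_ifs
  · rw [Finset.card_insert_of_notMem (fun hmem => hh (Finset.mem_of_mem_filter h hmem)), pow_succ,
      mul_neg_one]
  · rfl

lemma orientationSign_mul_orientationSign_insert {g h : ι} {s : Finset ι} (hgh : g ≠ h)
    (hg : g ∉ s) (hh : h ∉ s) :
    orientationSign g s * orientationSign h (insert g s) =
      -(orientationSign h s * orientationSign g (insert h s)) := by
  rw [orientationSign_insert hg, orientationSign_insert hh]
  rcases lt_or_gt_of_ne hgh with hlt | hlt <;> simp only [hlt, hlt.not_gt, if_true, if_false] <;>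
    ring

lemma orientationSign_insert_mul_orientationSign_insert {g h : ι} {s : Finset ι} (hgh : g ≠ h)
    (hg : g ∉ s) (hh : h ∉ s) :
    orientationSign h (insert g s) * orientationSign g (insert h s) =
      -(orientationSign g s * orientationSign h s) := by
  rw [orientationSign_insert hg, orientationSign_insert hh]
  rcases lt_or_gt_of_ne hgh with hlt | hlt <;> simp only [hlt, hlt.not_gt, if_true, if_false] <;>
    ring

section

variable [Fintype ι]

/-- The boundary operator of the augmented simplicial chain complex of the full simplex on `ι`,
in coordinates: a chain is the family of its coefficients. -/
def simplexBoundary (V : Finset ι → M) (t : Finset ι) : M :=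
  ∑ g ∈ tᶜ, orientationSign g t • V (insert g t)

lemma map_simplexBoundary {N : Type*} [AddCommGroup N] (f : M →+ N) (V : Finset ι → M)
    (t : Finset ι) : f (simplexBoundary V t) = simplexBoundary (fun s => f (V s)) t := by
  simp only [simplexBoundary, map_sum, map_zsmul]

lemma simplexBoundary_simplexBoundary (V : Finset ι → M) (t : Finset ι) :
    simplexBoundary (simplexBoundary V) t = 0 := by
  simp only [simplexBoundary, Finset.smul_sum, Finset.sum_sigma', smul_smul]
  refine Finset.sum_involution (fun p _ => ⟨p.2, p.1⟩) ?_ ?_ ?_ ?_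
  · rintro ⟨g, h⟩ hmem
    simp only [Finset.mem_sigma, Finset.mem_compl, Finset.mem_insert, not_or] at hmem
    rw [orientationSign_mul_orientationSign_insert (Ne.symm hmem.2.1) hmem.1 hmem.2.2,
      Finset.insert_comm, neg_smul, neg_add_cancel]
  · rintro ⟨g, h⟩ hmem - heq
    simp only [Finset.mem_sigma, Finset.mem_compl, Finset.mem_insert, not_or] at hmem
    exact hmem.2.1 (congrArg Sigma.fst heq)
  · rintro ⟨g, h⟩ hmem
    simp only [Finset.mem_sigma, Finset.mem_compl, Finset.mem_insert, not_or] at hmem ⊢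
    exact ⟨hmem.2.2, Ne.symm hmem.2.1, hmem.1⟩
  · exact fun _ _ => rfl

end

/-- The cone operator with apex `g` on chains of the full simplex: a contracting homotopy. -/
def simplexCone (g : ι) (V : Finset ι → M) (s : Finset ι) : M :=
  if g ∈ s then orientationSign g (s.erase g) • V (s.erase g) else 0

lemma simplexCone_of_notMem {g : ι} {s : Finset ι} (hg : g ∉ s) (V : Finset ι → M) :
    simplexCone g V s = 0 :=
  if_neg hg

lemma simplexCone_insert {g : ι} {s : Finset ι} (hg : g ∉ s) (V : Finset ι → M) :
    simplexCone g V (insert g s) = orientationSign g s • V s := by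
  rw [simplexCone, if_pos (Finset.mem_insert_self g s), Finset.erase_insert hg]

lemma simplexBoundary_simplexCone_add [Fintype ι] (g : ι) (V : Finset ι → M) (s : Finset ι) :
    simplexBoundary (simplexCone g V) s + simplexCone g (simplexBoundary V) s = V s := by
  by_cases hg : g ∈ s
  · obtain ⟨u, hu, rfl⟩ : ∃ u, g ∉ u ∧ insert g u = s :=
      ⟨s.erase g, Finset.notMem_erase g s, Finset.insert_erase hg⟩
    have hcompl : uᶜ = insert g (insert g u)ᶜ := by grind [Finset.mem_compl]
    rw [simplexCone_insert hu, simplexBoundary, simplexBoundary, hcompl,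
      Finset.sum_insert (by simp), smul_add, orientationSign_smul_smul_self, add_left_comm,
      Finset.smul_sum, ← Finset.sum_add_distrib, Finset.sum_eq_zero fun h hh => ?_, add_zero]
    simp only [Finset.mem_compl, Finset.mem_insert, not_or] at hh
    rw [Finset.insert_comm, simplexCone_insert (by simp [hu, Ne.symm hh.1]), smul_smul, smul_smul,
      orientationSign_insert_mul_orientationSign_insert (Ne.symm hh.1) hu hh.2, neg_smul,
      neg_add_cancel]
  · rw [simplexCone_of_notMem hg, add_zero, simplexBoundary,
      Finset.sum_eq_single_of_mem g (by simpa using hg), simplexCone_insert hg,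
      orientationSign_smul_smul_self]
    intro h _ hne
    rw [simplexCone_of_notMem (by simp [hg, Ne.symm hne]), smul_zero]

lemma exists_simplexBoundary_eq [Fintype ι] {P : ι → Prop} {V : Finset ι → M}
    (hV : simplexBoundary V = 0) (hsupp : ∀ s, V s ≠ 0 → ∀ g ∈ s, P g)
    (hempty : V ∅ ≠ 0 → ∃ g, P g) :
    ∃ W : Finset ι → M, simplexBoundary W = V ∧
      ∀ s, W s ≠ 0 → (∀ g ∈ s, P g) ∧ ∃ g ∈ s, V (s.erase g) ≠ 0 := by
  by_cases hP : ∃ g, P g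
  · obtain ⟨g, hg⟩ := hP
    refine ⟨simplexCone g V, funext fun s => ?_, fun s hs => ?_⟩
    · simpa [hV, simplexCone] using simplexBoundary_simplexCone_add g V s
    · have hgs : g ∈ s := by
        by_contra hgs
        exact hs (simplexCone_of_notMem hgs V)
      have hne : V (s.erase g) ≠ 0 := fun hzero => hs (by simp [simplexCone, hzero])
      exact ⟨fun h hh => (eq_or_ne h g).elim (fun heq => heq ▸ hg)
        fun hhg => hsupp _ hne h (Finset.mem_erase.mpr ⟨hhg, hh⟩), g, hgs, hne⟩
  · have hzero : V = 0 := by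
      funext s
      by_contra hs
      rcases s.eq_empty_or_nonempty with rfl | ⟨g, hg⟩
      · exact hP (hempty hs)
      · exact hP ⟨g, hsupp s hs g hg⟩
    exact ⟨0, hzero ▸ hV, fun s hs => absurd rfl hs⟩

end SimplexComplex

section EdgeMonomial

variable {K : Type} [Field K] {n : ℕ}

lemma edgeMonomial_eq_monomial (s : Finset (Fin n)) :
    edgeMonomial K s = monomial (∑ i ∈ s, Finsupp.single i 1) 1 := by
  simp only [edgeMonomial, monomial_sum_one, X]

lemma sum_single_one_le_iff {α : Type*} {s : Finset α} {a : α →₀ ℕ} :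
    ∑ i ∈ s, Finsupp.single i 1 ≤ a ↔ s ⊆ a.support := by
  classical
  have happly (i : α) : (∑ j ∈ s, Finsupp.single j 1 : α →₀ ℕ) i = if i ∈ s then 1 else 0 := by
    simp [Finsupp.finsetSum_apply, Finsupp.single_apply]
  simp only [Finsupp.le_def, happly, Finset.subset_iff, Finsupp.mem_support_iff]
  grind

lemma mem_span_edgeMonomial_iff {E : Set (Finset (Fin n))} {p : MvPolynomial (Fin n) K} :
    p ∈ Ideal.span (edgeMonomial K '' E) ↔ ∀ a ∈ p.support, ∃ e ∈ E, e ⊆ a.support := by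
  have himage : edgeMonomial K '' E =
      (fun a => monomial a 1) '' ((fun s => ∑ i ∈ s, Finsupp.single i 1) '' E) := by
    rw [Set.image_image]
    exact Set.image_congr fun s _ => edgeMonomial_eq_monomial s
  simp only [himage, mem_ideal_span_monomial_image, Set.exists_mem_image, sum_single_one_le_iff]

lemma edgeMonomial_dvd_iff {s : Finset (Fin n)} {p : MvPolynomial (Fin n) K} :
    edgeMonomial K s ∣ p ↔ ∀ a ∈ p.support, s ⊆ a.support := by
  rw [← Ideal.mem_span_singleton, ← Set.image_singleton, mem_span_edgeMonomial_iff]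
  simp only [Set.mem_singleton_iff, exists_eq_left]

lemma edgeMonomial_ne_zero (s : Finset (Fin n)) : edgeMonomial K s ≠ 0 :=
  Finset.prod_ne_zero_iff.mpr fun i _ => X_ne_zero i

lemma isHomogeneous_edgeMonomial (s : Finset (Fin n)) :
    (edgeMonomial K s).IsHomogeneous s.card := by
  simpa [edgeMonomial] using IsHomogeneous.prod s _ (fun _ => 1) fun i _ => isHomogeneous_X K i

lemma edgeMonomial_mul_sdiff (s t : Finset (Fin n)) :
    edgeMonomial K s * edgeMonomial K (t \ s) = edgeMonomial K (t ∪ s) := by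
  rw [edgeMonomial, edgeMonomial, ← Finset.prod_union Finset.disjoint_sdiff,
    Finset.union_sdiff_self_eq_union, Finset.union_comm, edgeMonomial]

lemma constantCoeff_edgeMonomial {s : Finset (Fin n)} (hs : s.Nonempty) :
    constantCoeff (edgeMonomial K s) = 0 := by
  obtain ⟨i, hi⟩ := hs
  rw [edgeMonomial, map_prod]
  exact Finset.prod_eq_zero hi (constantCoeff_X K i)

lemma isHomogeneous_span_edgeMonomial (E : Set (Finset (Fin n))) :
    (Ideal.span (edgeMonomial K '' E)).IsHomogeneous (homogeneousSubmodule (Fin n) K) := by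
  refine Ideal.homogeneous_span _ _ ?_
  rintro _ ⟨s, -, rfl⟩
  exact ⟨s.card, isHomogeneous_edgeMonomial s⟩

end EdgeMonomial

section TaylorDifferential

variable {K : Type} [Field K] {n : ℕ} {ι : Type*} [Fintype ι] [LinearOrder ι]
  (e : ι → Finset (Fin n))

/-- The differential of the Taylor complex of the monomials `edgeMonomial K (e g)`, on the free
module with one basis vector for every `s : Finset ι`, all homological degrees taken together. -/
noncomputable def taylorDifferential :
    (Finset ι → MvPolynomial (Fin n) K) →ₗ[MvPolynomial (Fin n) K]
      (Finset ι → MvPolynomial (Fin n) K) :=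
  LinearMap.pi fun t => ∑ g ∈ tᶜ, (orientationSign g t • edgeMonomial K (e g \ t.biUnion e)) •
    LinearMap.proj (insert g t)

lemma taylorDifferential_apply (v : Finset ι → MvPolynomial (Fin n) K) (t : Finset ι) :
    taylorDifferential e v t =
      ∑ g ∈ tᶜ, orientationSign g t • (edgeMonomial K (e g \ t.biUnion e) * v (insert g t)) := by
  simp [taylorDifferential, mul_assoc]

-- Rescaling the basis vector of `s` by `lcm {x^(e g) | g ∈ s}` turns the Taylor complex into the
-- chain complex of a simplex.
lemma edgeMonomial_mul_taylorDifferential (v : Finset ι → MvPolynomial (Fin n) K) (t : Finset ι) :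
    edgeMonomial K (t.biUnion e) * taylorDifferential e v t =
      simplexBoundary (fun s => edgeMonomial K (s.biUnion e) * v s) t := by
  simp only [taylorDifferential_apply, simplexBoundary, Finset.mul_sum, mul_smul_comm, ← mul_assoc,
    edgeMonomial_mul_sdiff, Finset.biUnion_insert]

lemma taylorDifferential_taylorDifferential (v : Finset ι → MvPolynomial (Fin n) K) :
    taylorDifferential e (taylorDifferential e v) = 0 := by
  funext t
  refine (mul_eq_zero.mp ?_).resolve_left (edgeMonomial_ne_zero (K := K) (t.biUnion e))
  simp only [edgeMonomial_mul_taylorDifferential]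
  exact simplexBoundary_simplexBoundary _ t

lemma taylorDifferential_empty_mem (v : Finset ι → MvPolynomial (Fin n) K) :
    taylorDifferential e v ∅ ∈ Ideal.span (edgeMonomial K '' Set.range e) := by
  rw [taylorDifferential_apply]
  refine Ideal.sum_mem _ fun g _ => zsmul_mem (Ideal.mul_mem_right _ _ ?_) _
  rw [Finset.biUnion_empty, Finset.sdiff_empty]
  exact Ideal.subset_span ⟨e g, ⟨g, rfl⟩, rfl⟩

lemma exists_ne_zero_of_taylorDifferential_ne_zero {v : Finset ι → MvPolynomial (Fin n) K}
    {t : Finset ι} (h : taylorDifferential e v t ≠ 0) : ∃ g ∉ t, v (insert g t) ≠ 0 := by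
  rw [taylorDifferential_apply] at h
  obtain ⟨g, hg, hne⟩ := Finset.exists_ne_zero_of_sum_ne_zero h
  exact ⟨g, Finset.mem_compl.mp hg, fun hzero => hne (by rw [hzero, mul_zero, smul_zero])⟩

lemma taylorDifferential_single (s t : Finset ι) :
    taylorDifferential e (Pi.single s (1 : MvPolynomial (Fin n) K)) t = 0 ∨
      ∃ g ∉ t, s = insert g t ∧ taylorDifferential e (Pi.single s (1 : MvPolynomial (Fin n) K)) t =
        orientationSign g t • edgeMonomial K (e g \ t.biUnion e) := by
  refine or_iff_not_imp_left.mpr fun hne => ?_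
  obtain ⟨g, hg, hs⟩ := exists_ne_zero_of_taylorDifferential_ne_zero e hne
  obtain rfl : insert g t = s := by
    by_contra hne
    exact hs (Pi.single_eq_of_ne hne _)
  refine ⟨g, hg, rfl, ?_⟩
  rw [taylorDifferential_apply, Finset.sum_eq_single_of_mem g (Finset.mem_compl.mpr hg),
    Pi.single_eq_same, mul_one]
  intro h hh hne
  rw [Pi.single_eq_of_ne, mul_zero, smul_zero]
  exact fun heq => hne ((Finset.insert_inj (Finset.mem_compl.mp hh)).mp heq)

lemma coeff_simplexBoundary {σ R : Type*} [CommRing R] (a : σ →₀ ℕ)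
    (V : Finset ι → MvPolynomial σ R) (t : Finset ι) :
    coeff a (simplexBoundary V t) = simplexBoundary (fun s => coeff a (V s)) t :=
  map_simplexBoundary (coeffAddMonoidHom a) V t

lemma exists_coeff_eq {σ R : Type*} [CommSemiring R] (c : (σ →₀ ℕ) → R) (S : Finset (σ →₀ ℕ))
    (hc : ∀ a, c a ≠ 0 → a ∈ S) : ∃ p : MvPolynomial σ R, ∀ a, coeff a p = c a := by
  classical
  refine ⟨∑ a ∈ S, monomial a (c a), fun a => ?_⟩
  simp only [coeff_sum, coeff_monomial, Finset.sum_ite_eq']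
  exact ite_eq_left_iff.mpr fun ha => (not_imp_comm.mp (hc a) ha).symm

variable {e}

-- In each multidegree `a`, the complex of rescaled chains is the chain complex of the simplex on
-- `{g | e g ⊆ a.support}`.
lemma exists_simplexBoundary_eq_of_edgeMonomial_dvd {V : Finset ι → MvPolynomial (Fin n) K}
    (hV : simplexBoundary V = 0) (hdvd : ∀ s, edgeMonomial K (s.biUnion e) ∣ V s)
    (hempty : V ∅ ∈ Ideal.span (edgeMonomial K '' Set.range e)) :
    ∃ W : Finset ι → MvPolynomial (Fin n) K, simplexBoundary W = V ∧
      ∀ s, edgeMonomial K (s.biUnion e) ∣ W s ∧ (W s ≠ 0 → ∃ g ∈ s, V (s.erase g) ≠ 0) := by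
  have hcoeff (a : Fin n →₀ ℕ) := exists_simplexBoundary_eq (P := fun g => e g ⊆ a.support)
    (V := fun s => coeff a (V s))
    (funext fun t => by rw [← coeff_simplexBoundary, hV, Pi.zero_apply, coeff_zero, Pi.zero_apply])
    (fun s hs => Finset.biUnion_subset.mp
      (edgeMonomial_dvd_iff.mp (hdvd s) a (mem_support_iff.mpr hs)))
    (fun hne => by simpa using mem_span_edgeMonomial_iff.mp hempty a (mem_support_iff.mpr hne))
  choose c hboundary hsupp using hcoeff
  have hassemble (s : Finset ι) := exists_coeff_eq (fun a => c a s)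
    (Finset.univ.biUnion fun t => (V t).support) fun a ha => by
      obtain ⟨-, g, -, hne⟩ := hsupp a s ha
      exact Finset.mem_biUnion.mpr ⟨s.erase g, Finset.mem_univ _, mem_support_iff.mpr hne⟩
  choose W hW using hassemble
  refine ⟨W, ?_, fun s => ⟨edgeMonomial_dvd_iff.mpr fun a ha => ?_, fun hne => ?_⟩⟩
  · funext t
    ext a
    rw [← congrFun (hboundary a) t, ← funext fun s => hW s a, coeff_simplexBoundary]
  · rw [mem_support_iff, hW] at ha
    exact Finset.biUnion_subset.mpr (hsupp a s ha).1
  · obtain ⟨a, ha⟩ := ne_zero_iff.mp hne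
    obtain ⟨-, g, hg, hcoeff⟩ := hsupp a s (hW s a ▸ ha)
    exact ⟨g, hg, ne_zero_iff.mpr ⟨a, hcoeff⟩⟩

theorem exists_taylorDifferential_eq {v : Finset ι → MvPolynomial (Fin n) K}
    (hv : taylorDifferential e v = 0)
    (hempty : v ∅ ∈ Ideal.span (edgeMonomial K '' Set.range e)) :
    ∃ w, taylorDifferential e w = v ∧ ∀ s, w s ≠ 0 → ∃ g ∈ s, v (s.erase g) ≠ 0 := by
  obtain ⟨W, hWV, hW⟩ := exists_simplexBoundary_eq_of_edgeMonomial_dvd (e := e)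
    (V := fun s => edgeMonomial K (s.biUnion e) * v s)
    (funext fun t => by
      rw [← edgeMonomial_mul_taylorDifferential, hv, Pi.zero_apply, mul_zero])
    (fun s => dvd_mul_right _ _) (Ideal.mul_mem_left _ _ hempty)
  choose w hw using fun s => (hW s).1
  obtain rfl : W = fun s => edgeMonomial K (s.biUnion e) * w s := funext hw
  refine ⟨w, funext fun t => ?_, fun s hs => ?_⟩
  · refine mul_left_cancel₀ (edgeMonomial_ne_zero (K := K) (t.biUnion e)) ?_
    rw [edgeMonomial_mul_taylorDifferential, hWV]
  · obtain ⟨g, hg, hne⟩ := (hW s).2 (mul_ne_zero (edgeMonomial_ne_zero _) hs)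
    exact ⟨g, hg, right_ne_zero_of_mul hne⟩

end TaylorDifferential

section TaylorResolution

variable {K : Type} [Field K] {n : ℕ} {ι : Type*} [Fintype ι]

/-- The `j`-th subset of `ι` of cardinality `i`, in an arbitrary enumeration. -/
noncomputable def face (i : ℕ) (j : Fin ((Finset.univ : Finset ι).powersetCard i).card) :
    Finset ι :=
  ((Finset.univ.powersetCard i).equivFin.symm j).1

lemma card_face (i : ℕ) (j : Fin ((Finset.univ : Finset ι).powersetCard i).card) :
    (face i j).card = i :=
  (Finset.mem_powersetCard.mp ((Finset.univ.powersetCard i).equivFin.symm j).2).2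

lemma face_injective (i : ℕ) : Function.Injective (face (ι := ι) i) :=
  Subtype.val_injective.comp (Equiv.injective _)

lemma exists_face_eq {i : ℕ} {s : Finset ι} (hs : s.card = i) : ∃ j, face i j = s :=
  ⟨(Finset.univ.powersetCard i).equivFin ⟨s, Finset.mem_powersetCard.mpr ⟨s.subset_univ, hs⟩⟩,
    by rw [face, Equiv.symm_apply_apply]⟩

/-- The inclusion of the part of homological degree `i` of the Taylor complex in the whole. -/
noncomputable def faceInclusion (A ι : Type*) [Fintype ι] [CommRing A] (i : ℕ) :
    (Fin ((Finset.univ : Finset ι).powersetCard i).card → A) →ₗ[A] (Finset ι → A) :=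
  Function.ExtendByZero.linearMap A (face i)

variable {A : Type*} [CommRing A]

lemma faceInclusion_face (i : ℕ) (v : Fin _ → A) (j) : faceInclusion A ι i v (face i j) = v j :=
  (face_injective i).extend_apply v 0 j

lemma faceInclusion_of_card_ne {i : ℕ} (v : Fin _ → A) {s : Finset ι} (hs : s.card ≠ i) :
    faceInclusion A ι i v s = 0 :=
  Function.extend_apply' _ _ _ fun ⟨j, hj⟩ => hs (hj ▸ card_face i j)

lemma faceInclusion_comp_face {i : ℕ} {v : Finset ι → A} (hv : ∀ s, v s ≠ 0 → s.card = i) :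
    faceInclusion A ι i (v ∘ face i) = v := by
  funext s
  by_cases hs : s.card = i
  · obtain ⟨j, rfl⟩ := exists_face_eq hs
    rw [faceInclusion_face, Function.comp_apply]
  · rw [faceInclusion_of_card_ne _ hs, not_imp_comm.mp (hv s) hs]

lemma faceInclusion_single [DecidableEq ι] (i : ℕ) (j) :
    faceInclusion A ι i (Pi.single j 1) = Pi.single (face i j) 1 := by
  refine (congrArg _ (funext fun j' => ?_)).trans
    (faceInclusion_comp_face fun s hs => ?_)
  · simp only [Function.comp_apply, Pi.single_apply, (face_injective i).eq_iff]
  · rw [Pi.single_apply, ite_ne_right_iff] at hs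
    exact hs.1 ▸ card_face i j

variable [LinearOrder ι] (e : ι → Finset (Fin n))

/-- The differential of the Taylor complex in homological degree `i + 1`. -/
noncomputable def taylorDifferentialAt (K : Type) [Field K] (i : ℕ) :
    (Fin ((Finset.univ : Finset ι).powersetCard (i + 1)).card → MvPolynomial (Fin n) K)
      →ₗ[MvPolynomial (Fin n) K]
    (Fin ((Finset.univ : Finset ι).powersetCard i).card → MvPolynomial (Fin n) K) :=
  LinearMap.funLeft _ _ (face i) ∘ₗ taylorDifferential e ∘ₗ faceInclusion _ ι (i + 1)

lemma taylorDifferentialAt_apply (i : ℕ) (v) (j) :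
    taylorDifferentialAt e K i v j =
      taylorDifferential e (faceInclusion _ ι (i + 1) v) (face i j) :=
  rfl

lemma taylorDifferential_faceInclusion_of_card_ne {i : ℕ} (v) {t : Finset ι}
    (ht : t.card + 1 ≠ i) :
    taylorDifferential e (faceInclusion (MvPolynomial (Fin n) K) ι i v) t = 0 := by
  by_contra hne
  obtain ⟨g, hg, hne⟩ := exists_ne_zero_of_taylorDifferential_ne_zero e hne
  exact hne (faceInclusion_of_card_ne v (by rwa [Finset.card_insert_of_notMem hg]))

lemma faceInclusion_taylorDifferentialAt (i : ℕ) (v) :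
    faceInclusion _ ι i (taylorDifferentialAt e K i v) =
      taylorDifferential e (faceInclusion _ ι (i + 1) v) :=
  faceInclusion_comp_face fun t ht => by
    by_contra hne
    exact ht (taylorDifferential_faceInclusion_of_card_ne e v (by simpa using hne))

lemma exists_taylorDifferentialAt_eq {i : ℕ} {v}
    (hv : taylorDifferential e (faceInclusion (MvPolynomial (Fin n) K) ι i v) = 0)
    (hempty : faceInclusion _ ι i v ∅ ∈ Ideal.span (edgeMonomial K '' Set.range e)) :
    ∃ w, taylorDifferentialAt e K i w = v := by
  obtain ⟨w, hwv, hw⟩ := exists_taylorDifferential_eq hv hempty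
  refine ⟨w ∘ face (i + 1), funext fun j => ?_⟩
  rw [taylorDifferentialAt_apply, faceInclusion_comp_face, hwv, faceInclusion_face]
  intro s hs
  obtain ⟨g, hg, hne⟩ := hw s hs
  have hcard : (s.erase g).card = i := by
    by_contra hcard
    exact hne (faceInclusion_of_card_ne v hcard)
  rw [← hcard, Finset.card_erase_add_one hg]

lemma range_taylorDifferentialAt_succ (i : ℕ) :
    LinearMap.range (taylorDifferentialAt e K (i + 1)) =
      LinearMap.ker (taylorDifferentialAt e K i) := by
  ext v
  rw [LinearMap.mem_range, LinearMap.mem_ker]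
  constructor
  · rintro ⟨w, rfl⟩
    funext j
    rw [taylorDifferentialAt_apply, faceInclusion_taylorDifferentialAt,
      taylorDifferential_taylorDifferential, Pi.zero_apply, Pi.zero_apply]
  · intro hv
    refine exists_taylorDifferentialAt_eq e ?_ ?_
    · rw [← faceInclusion_taylorDifferentialAt, hv, map_zero]
    · rw [faceInclusion_of_card_ne v (by simp)]
      exact Ideal.zero_mem _

lemma range_taylorDifferentialAt_zero :
    LinearMap.range (taylorDifferentialAt e K 0) =
      Submodule.comap (LinearMap.proj ∅ ∘ₗ faceInclusion _ ι 0)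
        (Ideal.span (edgeMonomial K '' Set.range e)) := by
  ext v
  rw [LinearMap.mem_range, Submodule.mem_comap, LinearMap.comp_apply, LinearMap.proj_apply]
  constructor
  · rintro ⟨w, rfl⟩
    rw [faceInclusion_taylorDifferentialAt]
    exact taylorDifferential_empty_mem e _
  · exact exists_taylorDifferentialAt_eq e (funext fun t =>
      taylorDifferential_faceInclusion_of_card_ne e v (Nat.succ_ne_zero _))

lemma taylorDifferential_single_homogeneous (s t : Finset ι) :
    taylorDifferential e (Pi.single s (1 : MvPolynomial (Fin n) K)) t = 0 ∨
      (t.biUnion e).card ≤ (s.biUnion e).card ∧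
        (taylorDifferential e (Pi.single s (1 : MvPolynomial (Fin n) K)) t).IsHomogeneous
          ((s.biUnion e).card - (t.biUnion e).card) := by
  refine (taylorDifferential_single e s t).imp_right ?_
  rintro ⟨g, -, rfl, hentry⟩
  have hcard : (t.biUnion e).card + (e g \ t.biUnion e).card =
      ((insert g t).biUnion e).card := by
    rw [Finset.biUnion_insert, add_comm, Finset.card_sdiff_add_card]
  rw [hentry, ← hcard, Nat.add_sub_cancel_left]
  exact ⟨Nat.le_add_right _ _, (mem_homogeneousSubmodule _ _).mp
    (zsmul_mem ((mem_homogeneousSubmodule _ _).mpr (isHomogeneous_edgeMonomial _)) _)⟩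

/-- The Taylor resolution of the ideal generated by the squarefree monomials
`edgeMonomial K (e g)`: the basis in homological degree `i` consists of the subsets `s` of `ι` of
cardinality `i`, and the twist of `s` is the degree of the lcm of the monomials indexed by `s`. -/
noncomputable def taylorResolution (K : Type) [Field K] :
    GFR n K (Ideal.span (edgeMonomial K '' Set.range e)) where
  len := Fintype.card ι
  rk i := ((Finset.univ : Finset ι).powersetCard i).card
  rk_zero i hi := by rw [Finset.powersetCard_eq_empty.mpr hi, Finset.card_empty]
  tw i j := ((face i j).biUnion e).card
  δ := taylorDifferentialAt e K
  δ_homog i k j := by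
    rw [taylorDifferentialAt_apply, faceInclusion_single]
    exact taylorDifferential_single_homogeneous e _ _
  aug := LinearMap.proj ∅ ∘ₗ faceInclusion _ ι 0
  aug_homog j := by
    have hface : face 0 j = ∅ := Finset.card_eq_zero.mp (card_face 0 j)
    rw [LinearMap.comp_apply, faceInclusion_single, LinearMap.proj_apply, hface,
      Pi.single_eq_same, Finset.biUnion_empty]
    exact isHomogeneous_one _ _
  aug_surj r := by
    obtain ⟨j, hj⟩ := exists_face_eq (ι := ι) Finset.card_empty
    refine ⟨fun _ => r, ?_⟩
    rw [LinearMap.comp_apply, LinearMap.proj_apply, ← hj, faceInclusion_face, sub_self]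
    exact Ideal.zero_mem _
  exact_zero := range_taylorDifferentialAt_zero e
  exact_succ := range_taylorDifferentialAt_succ e

lemma constantCoeff_taylorDifferentialAt_single {i : ℕ} {k j}
    (h : ∀ g ∉ face i j, face (i + 1) k = insert g (face i j) → ¬e g ⊆ (face i j).biUnion e) :
    constantCoeff (taylorDifferentialAt e K i (Pi.single k 1) j) = 0 := by
  rw [taylorDifferentialAt_apply, faceInclusion_single]
  rcases taylorDifferential_single (K := K) e (face (i + 1) k) (face i j) with
    hzero | ⟨g, hg, hface, hentry⟩
  · rw [hzero, map_zero]
  · rw [hentry, map_zsmul, constantCoeff_edgeMonomial (Finset.sdiff_nonempty.mpr (h g hg hface)),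
      smul_zero]

lemma isMinimalAt_taylorResolution {i : ℕ} {k}
    (herase : ∀ g ∈ face (i + 1) k, ¬e g ⊆ ((face (i + 1) k).erase g).biUnion e)
    (hinsert : ∀ g ∉ face (i + 1) k, ¬e g ⊆ (face (i + 1) k).biUnion e) :
    (taylorResolution e K).IsMinimalAt i k := by
  refine ⟨fun j => constantCoeff_taylorDifferentialAt_single e fun g hg hface => ?_,
    fun l => constantCoeff_taylorDifferentialAt_single e fun g hg _ => hinsert g hg⟩
  have hfacet : (face (i + 1) k).erase g = face i j := by rw [hface, Finset.erase_insert hg]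
  exact hfacet ▸ herase g (hface ▸ Finset.mem_insert_self g _)

end TaylorResolution

lemma card_biUnion_le_regR_span_add_card {K : Type} [Field K] {n : ℕ} {ι : Type*} [Finite ι]
    [LinearOrder ι] (e : ι → Finset (Fin n)) {S : Finset ι}
    (herase : ∀ g ∈ S, ¬e g ⊆ (S.erase g).biUnion e)
    (hinsert : ∀ g ∉ S, ¬e g ⊆ S.biUnion e) :
    (S.biUnion e).card ≤ regR (Ideal.span (edgeMonomial K '' Set.range e)) + S.card := by
  cases nonempty_fintype ι
  rcases S.eq_empty_or_nonempty with rfl | hS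
  · simp
  obtain ⟨i, hi⟩ := Nat.exists_eq_add_one.mpr hS.card_pos
  obtain ⟨k, rfl⟩ := exists_face_eq hi
  rw [hi]
  exact (taylorResolution e K).tw_le_regR_of_isMinimalAt (isHomogeneous_span_edgeMonomial _)
    (isMinimalAt_taylorResolution e herase hinsert)

namespace Clutter

variable {n : ℕ} {C : Clutter n}

theorem card_biUnion_le_regR_add_card (K : Type) [Field K] {S : Finset (Finset (Fin n))}
    (hS : S ⊆ C.edges) (herase : ∀ f ∈ S, ¬f ⊆ (S.erase f).biUnion id)
    (hinsert : ∀ f ∈ C.edges, f ∉ S → ¬f ⊆ S.biUnion id) :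
    (S.biUnion id).card ≤ regR (C.edgeIdeal K) + S.card := by
  let e (i : Fin C.edges.card) : Finset (Fin n) := C.edges.equivFin.symm i
  have he : Function.Injective e := Subtype.val_injective.comp (Equiv.injective _)
  have hrange : Set.range e = C.edges := by
    rw [Set.range_comp' Subtype.val, Equiv.range_eq_univ, Set.image_univ, Subtype.range_coe]
  obtain ⟨T, rfl⟩ : ∃ T : Finset _, T.image e = S := by
    rw [← Finset.subset_univ_image_iff, ← Finset.coe_subset, Finset.coe_image, Finset.coe_univ,
      Set.image_univ, hrange]
    exact hS
  have hbiUnion (U : Finset (Fin C.edges.card)) : (U.image e).biUnion id = U.biUnion e :=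
    Finset.image_biUnion
  rw [edgeIdeal, ← hrange, hbiUnion, Finset.card_image_of_injective T he]
  refine card_biUnion_le_regR_span_add_card e (fun g hg => ?_) fun g hg => ?_
  · rw [← hbiUnion, Finset.image_erase he]
    exact herase (e g) (Finset.mem_image_of_mem e hg)
  · rw [← hbiUnion]
    exact hinsert (e g) (Finset.mem_coe.mp (hrange ▸ Set.mem_range_self g))
      (by rwa [he.mem_finset_image])

namespace IsInducedMatching

variable {r : ℕ} {f : Fin r → Finset (Fin n)} (hf : C.IsInducedMatching f)

include hf

lemma eq_of_mem_of_mem {x : Fin n} {i j : Fin r} (hi : x ∈ f i) (hj : x ∈ f j) : i = j := by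
  by_contra hij
  exact Finset.disjoint_left.mp (hf.2.1 i j hij) hi hj

lemma eq_empty_of_eq_empty {i : Fin r} (hi : f i = ∅) (j : Fin r) : f j = ∅ :=
  (C.antichain _ (hf.1 i) _ (hf.1 j) (hi ▸ Finset.empty_subset _)).symm.trans hi

lemma injective_of_nonempty (hne : ∀ i, (f i).Nonempty) : Function.Injective f := by
  intro i j hij
  obtain ⟨x, hx⟩ := hne i
  exact hf.eq_of_mem_of_mem hx (hij ▸ hx)

lemma not_subset_biUnion_erase {i : Fin r} (hi : (f i).Nonempty) :
    ¬f i ⊆ ((Finset.univ.image f).erase (f i)).biUnion id := by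
  obtain ⟨x, hx⟩ := hi
  intro hsub
  obtain ⟨_, hj, hxj⟩ := Finset.mem_biUnion.mp (hsub hx)
  obtain ⟨hji, hj⟩ := Finset.mem_erase.mp hj
  obtain ⟨j, -, rfl⟩ := Finset.mem_image.mp hj
  exact hji (congrArg f (hf.eq_of_mem_of_mem hxj hx))

theorem sum_card_le_regR_add (K : Type) [Field K] :
    ∑ i, (f i).card ≤ regR (C.edgeIdeal K) + r := by
  by_cases hempty : ∃ i, f i = ∅
  · obtain ⟨i, hi⟩ := hempty
    simp [hf.eq_empty_of_eq_empty hi]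
  have hne (i : Fin r) : (f i).Nonempty := Finset.nonempty_iff_ne_empty.mpr fun hi => hempty ⟨i, hi⟩
  have hbiUnion : (Finset.univ.image f).biUnion id = Finset.univ.biUnion f := Finset.image_biUnion
  have hreg := C.card_biUnion_le_regR_add_card K (S := Finset.univ.image f)
    (Finset.image_subset_iff.mpr fun i _ => hf.1 i)
    (Finset.forall_mem_image.mpr fun i _ => hf.not_subset_biUnion_erase (hne i))
    fun e he hmem hsub => by
      obtain ⟨i, rfl⟩ := hf.2.2 e he (hbiUnion ▸ hsub)
      exact hmem (Finset.mem_image_of_mem f (Finset.mem_univ i))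
  rwa [hbiUnion, Finset.card_biUnion fun i _ j _ => hf.2.1 i j,
    Finset.card_image_of_injective _ (hf.injective_of_nonempty hne), Finset.card_fin] at hreg

end IsInducedMatching

theorem imClutter_le_regR (K : Type) [Field K] (hC : ∀ e ∈ C.edges, 2 ≤ e.card) :
    imClutter C ≤ regR (C.edgeIdeal K) := by
  refine csSup_le' ?_
  rintro r ⟨f, hf⟩
  have hcard : r * 2 ≤ ∑ i, (f i).card := by
    simpa using Finset.card_nsmul_le_sum Finset.univ _ 2 fun i _ => hC _ (hf.1 i)
  have hreg := hf.sum_card_le_regR_add K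
  omega

end Clutter

theorem stmt_4_general (K : Type) [Field K] {n : ℕ} :
    (∀ (C : Clutter n) (r : ℕ) (f : Fin r → Finset (Fin n)),
      C.IsInducedMatching f → (∑ i, (f i).card) ≤ regR (C.edgeIdeal K) + r) ∧
    (∀ C : Clutter n, (∀ e ∈ C.edges, 2 ≤ e.card) →
      imClutter C ≤ regR (C.edgeIdeal K)) :=
  ⟨fun _ _ _ hf => hf.sum_card_le_regR_add K, fun _ hC => Clutter.imClutter_le_regR K hC⟩

/-- If `f₁,…,f_r` is an induced matching of a clutter `C` with
`dᵢ = |fᵢ|`, then `(∑ dᵢ) - r ≤ reg(R/I(C))` (stated as `∑ dᵢ ≤ reg(R/I(C)) + r`).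
In particular, for a graph `G` (a clutter all of whose edges have two vertices),
`im(G) ≤ reg(R/I(G))`. -/
theorem stmt_4 (K : Type) [Field K] {n : ℕ} :
    (∀ (C : Clutter n) (r : ℕ) (f : Fin r → Finset (Fin n)),
      C.IsInducedMatching f → (∑ i, (f i).card) ≤ regR (C.edgeIdeal K) + r) ∧
    (∀ C : Clutter n, (∀ e ∈ C.edges, e.card = 2) →
      imClutter C ≤ regR (C.edgeIdeal K)) :=
  (stmt_4_general K).imp_right fun hgraph C hC => hgraph C fun e he => (hC e he).ge
end

section
/- For any finite simple graph G with edge ideal I(G) ⊂ R = K[V(G)], reg(R/I(G)) ≤ β'(G), where β'(G) is the cardinality of a smallest maximal matching of G. -/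
open MvPolynomial

/-- The edge ideal of a (simple) graph, in `K[x_v : v ∈ V]`. -/
noncomputable def graphIdeal (K : Type) [Field K] {V : Type} (G : SimpleGraph V) :
    Ideal (MvPolynomial V K) :=
  Ideal.span { m : MvPolynomial V K | ∃ u v : V, G.Adj u v ∧ m = X u * X v }

/-- A matching of a graph: a finite set of pairwise disjoint edges. -/
def SimpleGraph.IsMatchingSet {V : Type} (G : SimpleGraph V) (M : Finset (Sym2 V)) : Prop :=
  (∀ e ∈ M, e ∈ G.edgeSet) ∧
  (∀ e ∈ M, ∀ f ∈ M, e ≠ f → ∀ v : V, ¬(v ∈ e ∧ v ∈ f))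

/-- A maximal matching of a graph (maximal with respect to inclusion). -/
def SimpleGraph.IsMaximalMatchingSet {V : Type} [DecidableEq V] (G : SimpleGraph V)
    (M : Finset (Sym2 V)) : Prop :=
  G.IsMatchingSet M ∧ ∀ e ∈ G.edgeSet, e ∉ M → ¬G.IsMatchingSet (insert e M)

/-- `β'(G)`: the minimum size of a maximal matching of `G`. -/
noncomputable def betaPrime {V : Type} [DecidableEq V] (G : SimpleGraph V) : ℕ :=
  sInf { k : ℕ | ∃ M : Finset (Sym2 V), G.IsMaximalMatchingSet M ∧ M.card = k }

/-!
For a vertex `x` of `G`, the sequence `0 → R/(I : x) (-1) → R/I → R/(I, x) → 0` is exact, where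
`I : x` and `(I, x)` are edge ideals of `G` without the neighbours of `x`, respectively without `x`,
plus variables. The horseshoe lemma gives `reg R/I ≤ max (reg R/(I : x) + 1, reg R/(I, x))`. Using
this for both endpoints of an edge `xy` bounds the regularity by one more than that of graphs in
which no edge meets `x` or `y`. Running through the edges of a maximal matching, one arrives at
graphs without edges, whose quotients are polynomial rings and have regularity zero.
-/

universe u

section Grading

variable {ι : Type*} [DecidableEq ι] {M N : Type*} [AddCommGroup M] [AddCommGroup N]
  {𝓜 : ι → AddSubgroup M} {𝓝 : ι → AddSubgroup N} {π : ι → M →+ M} {ρ : ι → N →+ N}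

/-- `π d` takes each element to its homogeneous component of degree `d` with respect to the
family `𝓜` of subgroups: the data of a direct sum decomposition, as endomorphisms of `M`. -/
structure IsComponents (𝓜 : ι → AddSubgroup M) (π : ι → M →+ M) : Prop where
  mem : ∀ d y, π d y ∈ 𝓜 d
  apply_of_mem : ∀ {d y}, y ∈ 𝓜 d → ∀ e, π e y = if e = d then y else 0
  exists_sum_eq : ∀ y, ∃ s : Finset ι, ∀ t, s ⊆ t → ∑ d ∈ t, π d y = y

namespace IsComponents

theorem isInternal (h : IsComponents 𝓜 π) : DirectSum.IsInternal 𝓜 := by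
  constructor
  · have hπ : ∀ (x : DirectSum ι fun d => 𝓜 d) (e : ι),
        π e (DirectSum.coeAddMonoidHom 𝓜 x) = (x e : M) := by
      intro x e
      induction x using DirectSum.induction_on with
      | zero => simp
      | of d y =>
        rw [DirectSum.coeAddMonoidHom_of, h.apply_of_mem y.2, DirectSum.coe_of_apply]
        simp only [eq_comm (a := e), apply_ite Subtype.val, ZeroMemClass.coe_zero]
      | add x y hx hy => rw [map_add, map_add, hx, hy, DirectSum.add_apply, AddSubgroup.coe_add]
    intro x y hxy
    exact DFinsupp.ext fun e => Subtype.ext (by rw [← hπ, ← hπ, hxy])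
  · intro y
    obtain ⟨s, hs⟩ := h.exists_sum_eq y
    refine ⟨∑ d ∈ s, DirectSum.of (fun d => 𝓜 d) d ⟨π d y, h.mem d y⟩, ?_⟩
    simp only [map_sum, DirectSum.coeAddMonoidHom_of, hs s subset_rfl]

theorem map_apply (h𝓜 : IsComponents 𝓜 π) (h𝓝 : IsComponents 𝓝 ρ) {f : M →+ N}
    (hf : ∀ d, Set.MapsTo f (𝓜 d) (𝓝 d)) (d : ι) (y : M) : f (π d y) = ρ d (f y) := by
  obtain ⟨s, hs⟩ := h𝓜.exists_sum_eq y
  have hρ : ∀ e, ρ d (f (π e y)) = if d = e then f (π d y) else 0 := fun e => by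
    rw [h𝓝.apply_of_mem (hf e (h𝓜.mem e y))]
    split_ifs with hde
    · rw [hde]
    · rfl
  symm
  calc ρ d (f y) = ∑ e ∈ insert d s, ρ d (f (π e y)) := by
        rw [← map_sum, ← map_sum, hs _ (Finset.subset_insert d s)]
    _ = f (π d y) := by
        simp only [hρ, Finset.sum_ite_eq, Finset.mem_insert_self, if_true]

theorem comap_subtype (h : IsComponents 𝓜 π) {L : AddSubgroup M} (hL : ∀ d, ∀ y ∈ L, π d y ∈ L) :
    IsComponents (fun d => (𝓜 d).comap L.subtype)
      (fun d => ((π d).comp L.subtype).codRestrict L fun y => hL d y y.2) where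
  mem d y := h.mem d y
  apply_of_mem {d y} hy e := Subtype.ext <| by
    refine (h.apply_of_mem (AddSubgroup.mem_comap.1 hy) e).trans ?_
    split_ifs <;> rfl
  exists_sum_eq y := by
    obtain ⟨s, hs⟩ := h.exists_sum_eq y
    refine ⟨s, fun t ht => Subtype.ext ?_⟩
    rw [AddSubgroup.val_finsetSum]
    exact hs t ht

theorem map_of_surjective (h : IsComponents 𝓜 π) {f : M →+ N} (hf : Function.Surjective f)
    (hker : ∀ d, ∀ y ∈ f.ker, π d y ∈ f.ker) :
    ∃ ρ : ι → N →+ N, IsComponents (fun d => (𝓜 d).map f) ρ := by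
  have hle : ∀ d, f.ker ≤ (f.comp (π d)).ker := hker
  let ρ : ι → N →+ N := fun d => AddMonoidHom.liftOfSurjective f hf ⟨f.comp (π d), hle d⟩
  have hρ : ∀ d y, ρ d (f y) = f (π d y) := fun d y =>
    AddMonoidHom.liftOfRightInverse_comp_apply f _ _ ⟨f.comp (π d), hle d⟩ y
  refine ⟨ρ, fun d z => ?_, ?_, fun z => ?_⟩
  · obtain ⟨y, rfl⟩ := hf z
    exact ⟨π d y, h.mem d y, (hρ d y).symm⟩
  · rintro d _ ⟨y, hy, rfl⟩ e
    rw [hρ, h.apply_of_mem hy]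
    split_ifs
    · rfl
    · exact map_zero f
  · obtain ⟨y, rfl⟩ := hf z
    obtain ⟨s, hs⟩ := h.exists_sum_eq y
    exact ⟨s, fun t ht => by simp only [hρ, ← map_sum, hs t ht]⟩

theorem pi {κ : Type*} [Finite κ] {X : κ → Type*} [∀ k, AddCommGroup (X k)]
    {𝓧 : ∀ k, ι → AddSubgroup (X k)} {ξ : ∀ k, ι → X k →+ X k}
    (h : ∀ k, IsComponents (𝓧 k) (ξ k)) :
    IsComponents (fun d => AddSubgroup.pi Set.univ fun k => 𝓧 k d)
      (fun d => AddMonoidHom.pi fun k => (ξ k d).comp (Pi.evalAddMonoidHom X k)) where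
  mem d y k _ := (h k).mem d (y k)
  apply_of_mem {d y} hy e := funext fun k => by
    refine ((h k).apply_of_mem (hy k trivial) e).trans ?_
    split_ifs <;> rfl
  exists_sum_eq y := by
    have := Fintype.ofFinite κ
    choose s hs using fun k => (h k).exists_sum_eq (y k)
    refine ⟨Finset.univ.biUnion s, fun t ht => funext fun k => ?_⟩
    rw [Finset.sum_apply]
    exact hs k t ((Finset.subset_biUnion_of_mem s (Finset.mem_univ k)).trans ht)

end IsComponents

theorem isComponents_decompose (𝓜 : ι → AddSubgroup M) [DirectSum.Decomposition 𝓜] :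
    IsComponents 𝓜 fun d => (𝓜 d).subtype.comp ((DFinsupp.evalAddMonoidHom d).comp
      (DirectSum.decomposeAddEquiv 𝓜).toAddMonoidHom) where
  mem d y := Subtype.prop _
  apply_of_mem {d y} hy e := by
    change (DirectSum.decompose 𝓜 y e : M) = _
    split_ifs with hed
    · rw [hed, DirectSum.decompose_of_mem_same 𝓜 hy]
    · rw [DirectSum.decompose_of_mem_ne 𝓜 hy (Ne.symm hed)]
  exists_sum_eq y := by
    classical
    refine ⟨(DirectSum.decompose 𝓜 y).support, fun t ht => ?_⟩
    conv_rhs => rw [← DirectSum.sum_support_decompose 𝓜 y]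
    refine (Finset.sum_subset ht fun d _ hd => ?_).symm
    have hzero : DirectSum.decompose 𝓜 y d = 0 := by
      rwa [DFinsupp.mem_support_iff, not_not] at hd
    exact congrArg Subtype.val hzero

theorem isInternal_iff_exists_isComponents : DirectSum.IsInternal 𝓜 ↔ ∃ π, IsComponents 𝓜 π := by
  refine ⟨fun h => ?_, fun ⟨_, h⟩ => h.isInternal⟩
  let _ := h.chooseDecomposition
  exact ⟨_, isComponents_decompose 𝓜⟩

end Grading

section Shift

variable {M N : Type*} [AddCommGroup M] [AddCommGroup N] {𝓜 : ℕ → AddSubgroup M} {d k : ℕ}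

/-- The grading of the twist `M(-k)`, in which degrees are raised by `k`. -/
def shift (𝓜 : ℕ → AddSubgroup M) (k d : ℕ) : AddSubgroup M :=
  if k ≤ d then 𝓜 (d - k) else ⊥

theorem shift_of_le (h : k ≤ d) : shift 𝓜 k d = 𝓜 (d - k) := if_pos h

theorem shift_of_lt (h : d < k) : shift 𝓜 k d = ⊥ := if_neg h.not_ge

theorem mem_shift {y : M} : y ∈ shift 𝓜 k d ↔ y = 0 ∨ k ≤ d ∧ y ∈ 𝓜 (d - k) := by
  rcases le_or_gt k d with h | h
  · simp only [shift_of_le h, h, true_and]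
    exact ⟨Or.inr, fun hy => hy.elim (fun h0 => h0 ▸ zero_mem _) id⟩
  · simp only [shift_of_lt h, h.not_ge, false_and, or_false, AddSubgroup.mem_bot]

theorem shift_shift (𝓜 : ℕ → AddSubgroup M) (j k : ℕ) :
    shift (shift 𝓜 j) k = shift 𝓜 (j + k) := by
  funext d
  ext y
  simp only [mem_shift]
  rw [show d - k - j = d - (j + k) by omega]
  constructor
  · rintro (h | ⟨hk, h | ⟨hj, h⟩⟩)
    exacts [Or.inl h, Or.inl h, Or.inr ⟨by omega, h⟩]
  · rintro (h | ⟨hjk, h⟩)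
    exacts [Or.inl h, Or.inr ⟨by omega, Or.inr ⟨by omega, h⟩⟩]

theorem shift_comap {f : N →+ M} (hf : Function.Injective f) (k : ℕ) :
    (fun d => (shift 𝓜 k d).comap f) = shift (fun d => (𝓜 d).comap f) k := by
  funext d
  ext y
  simp only [AddSubgroup.mem_comap, mem_shift, map_eq_zero_iff f hf]

theorem IsComponents.shift {π : ℕ → M →+ M} (h : IsComponents 𝓜 π) (k : ℕ) :
    IsComponents (shift 𝓜 k) fun d => if k ≤ d then π (d - k) else 0 where
  mem d y := by
    rcases le_or_gt k d with hk | hk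
    · rw [shift_of_le hk, if_pos hk]
      exact h.mem _ y
    · rw [if_neg hk.not_ge]
      exact zero_mem _
  apply_of_mem {d y} hy e := by
    rcases mem_shift.1 hy with rfl | ⟨hkd, hy⟩
    · simp only [map_zero, ite_self]
    split_ifs with hke hed hed
    · rw [h.apply_of_mem hy, if_pos (by rw [hed])]
    · rw [h.apply_of_mem hy, if_neg (by omega)]
    · omega
    · rfl
  exists_sum_eq y := by
    obtain ⟨s, hs⟩ := h.exists_sum_eq y
    refine ⟨s.map (addRightEmbedding k), fun t ht => ?_⟩
    have hst : s ⊆ (t.filter (k ≤ ·)).image (· - k) := fun e he =>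
      Finset.mem_image.2 ⟨e + k, Finset.mem_filter.2
        ⟨ht (Finset.mem_map_of_mem _ he), Nat.le_add_left k e⟩, Nat.add_sub_cancel e k⟩
    have hinj : Set.InjOn (· - k) (t.filter (k ≤ ·) : Set ℕ) := fun a ha b hb hab =>
      (tsub_left_inj (Finset.mem_filter.1 ha).2 (Finset.mem_filter.1 hb).2).1 hab
    refine Eq.trans ?_ (hs _ hst)
    rw [Finset.sum_image hinj, Finset.sum_filter]
    exact Finset.sum_congr rfl fun d _ => by split_ifs <;> rfl

end Shift

section GradedModule

variable {R M N : Type*} [CommRing R] [AddCommGroup M] [Module R M]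
  [AddCommGroup N] [Module R N]

/-- `𝓜` makes `M` a graded module over `R`, graded by `𝒜`. Gradings are plain families of
subgroups, so that kernels and quotients need no decomposition data. -/
structure IsGradedModule (𝒜 : ℕ → AddSubgroup R) (𝓜 : ℕ → AddSubgroup M) : Prop where
  isInternal : DirectSum.IsInternal 𝓜
  smul_mem : ∀ {d e a y}, a ∈ 𝒜 d → y ∈ 𝓜 e → a • y ∈ 𝓜 (d + e)

/-- The grading induced on a submodule. -/
def restrictGrading (𝓜 : ℕ → AddSubgroup M) (L : Submodule R M) (d : ℕ) : AddSubgroup L :=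
  (𝓜 d).comap L.toAddSubgroup.subtype

/-- The grading of the free module `⨁ j, R(-t j)`. -/
def twistedFree {ι : Type*} (𝒜 : ℕ → AddSubgroup R) (t : ι → ℕ) (d : ℕ) : AddSubgroup (ι → R) :=
  AddSubgroup.pi Set.univ fun j => shift 𝒜 (t j) d

/-- The relations among the generators `v j`, of degrees `t j`, carry the grading of the free
module they lie in. -/
abbrev relationGrading {ι : Type*} [Fintype ι] (𝒜 : ℕ → AddSubgroup R) (t : ι → ℕ) (v : ι → M) :
    ℕ → AddSubgroup (LinearMap.ker (Fintype.linearCombination R v)) :=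
  restrictGrading (twistedFree 𝒜 t) (LinearMap.ker (Fintype.linearCombination R v))

variable {𝒜 : ℕ → AddSubgroup R} {𝓜 : ℕ → AddSubgroup M} {𝓝 : ℕ → AddSubgroup N} {d k : ℕ}

theorem mem_twistedFree {ι : Type*} {t : ι → ℕ} {f : ι → R} :
    f ∈ twistedFree 𝒜 t d ↔ ∀ j, f j ∈ shift 𝒜 (t j) d := by
  simp only [twistedFree, AddSubgroup.mem_pi, Set.mem_univ, true_imp_iff]

theorem twistedFree_add {ι : Type*} (t : ι → ℕ) (k : ℕ) :
    twistedFree 𝒜 (fun j => t j + k) = shift (twistedFree 𝒜 t) k := by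
  funext d
  ext f
  simp only [mem_twistedFree, ← shift_shift _ _ k]
  rcases le_or_gt k d with hk | hk
  · simp only [shift_of_le hk, mem_twistedFree]
  · simp only [shift_of_lt hk, AddSubgroup.mem_bot, funext_iff, Pi.zero_apply]

namespace IsGradedModule

theorem exists_mem_apply_eq (h𝓜 : IsGradedModule 𝒜 𝓜) (h𝓝 : IsGradedModule 𝒜 𝓝) {f : M →ₗ[R] N}
    (hf : ∀ d, Set.MapsTo f (𝓜 d) (𝓝 d)) {z : N} (hz : z ∈ 𝓝 d) (hzf : z ∈ LinearMap.range f) :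
    ∃ y ∈ 𝓜 d, f y = z := by
  obtain ⟨π, hπ⟩ := isInternal_iff_exists_isComponents.1 h𝓜.isInternal
  obtain ⟨ρ, hρ⟩ := isInternal_iff_exists_isComponents.1 h𝓝.isInternal
  obtain ⟨y, rfl⟩ := hzf
  refine ⟨π d y, hπ.mem d y, ?_⟩
  calc f (π d y) = ρ d (f y) := hπ.map_apply (f := f.toAddMonoidHom) hρ hf d y
    _ = f y := by rw [hρ.apply_of_mem hz, if_pos rfl]

theorem mem_of_apply_mem (h𝓜 : IsGradedModule 𝒜 𝓜) (h𝓝 : IsGradedModule 𝒜 𝓝) {f : M →ₗ[R] N}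
    (hinj : Function.Injective f) (hf : ∀ d, Set.MapsTo f (𝓜 d) (𝓝 d)) {y : M}
    (hy : f y ∈ 𝓝 d) : y ∈ 𝓜 d := by
  obtain ⟨x, hx, hxy⟩ := h𝓜.exists_mem_apply_eq h𝓝 hf hy ⟨y, rfl⟩
  exact hinj hxy ▸ hx

theorem ker (h𝓜 : IsGradedModule 𝒜 𝓜) (h𝓝 : IsGradedModule 𝒜 𝓝) {f : M →ₗ[R] N}
    (hf : ∀ d, Set.MapsTo f (𝓜 d) (𝓝 d)) :
    IsGradedModule 𝒜 (restrictGrading 𝓜 (LinearMap.ker f)) where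
  isInternal := by
    obtain ⟨π, hπ⟩ := isInternal_iff_exists_isComponents.1 h𝓜.isInternal
    obtain ⟨ρ, hρ⟩ := isInternal_iff_exists_isComponents.1 h𝓝.isInternal
    refine (hπ.comap_subtype (L := (LinearMap.ker f).toAddSubgroup) fun d y hy => ?_).isInternal
    have hy : f y = 0 := hy
    change f.toAddMonoidHom (π d y) = 0
    rw [hπ.map_apply hρ hf, LinearMap.toAddMonoidHom_coe, hy, map_zero]
  smul_mem ha hy := h𝓜.smul_mem ha hy

theorem map_of_surjective (h𝓜 : IsGradedModule 𝒜 𝓜) {f : M →ₗ[R] N} (hf : Function.Surjective f)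
    {π : ℕ → M →+ M} (hπ : IsComponents 𝓜 π) (hker : ∀ d, ∀ y ∈ LinearMap.ker f, f (π d y) = 0) :
    IsGradedModule 𝒜 fun d => (𝓜 d).map f.toAddMonoidHom where
  isInternal := isInternal_iff_exists_isComponents.2 (hπ.map_of_surjective hf hker)
  smul_mem {d e a _} ha := by
    rintro ⟨y, hy, rfl⟩
    exact ⟨a • y, h𝓜.smul_mem ha hy, f.map_smul a y⟩

theorem shift (h : IsGradedModule 𝒜 𝓜) (k : ℕ) : IsGradedModule 𝒜 (shift 𝓜 k) where
  isInternal := by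
    obtain ⟨π, hπ⟩ := isInternal_iff_exists_isComponents.1 h.isInternal
    exact (hπ.shift k).isInternal
  smul_mem {d e a y} ha hy := by
    rcases mem_shift.1 hy with rfl | ⟨hke, hy⟩
    · rw [smul_zero]
      exact zero_mem _
    · refine mem_shift.2 (Or.inr ⟨by omega, ?_⟩)
      rw [Nat.add_sub_assoc hke]
      exact h.smul_mem ha hy

theorem pi {ι : Type*} [Finite ι] {𝓧 : ι → ℕ → AddSubgroup M} (h : ∀ j, IsGradedModule 𝒜 (𝓧 j)) :
    IsGradedModule 𝒜 fun d => AddSubgroup.pi Set.univ fun j => 𝓧 j d where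
  isInternal := by
    choose π hπ using fun j => isInternal_iff_exists_isComponents.1 (h j).isInternal
    exact (IsComponents.pi hπ).isInternal
  smul_mem ha hy j _ := (h j).smul_mem ha (hy j trivial)

theorem self [GradedRing 𝒜] : IsGradedModule 𝒜 𝒜 where
  isInternal := DirectSum.Decomposition.isInternal 𝒜
  smul_mem ha hy := SetLike.mul_mem_graded ha hy

theorem twistedFree [GradedRing 𝒜] {ι : Type*} [Finite ι] (t : ι → ℕ) :
    IsGradedModule 𝒜 (twistedFree 𝒜 t) :=
  pi fun j => self.shift (t j)

theorem mapsTo_linearCombination (h : IsGradedModule 𝒜 𝓜) {ι : Type*} [Fintype ι] {t : ι → ℕ}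
    {v : ι → M} (hv : ∀ j, v j ∈ 𝓜 (t j)) (d : ℕ) :
    Set.MapsTo (Fintype.linearCombination R v) (_root_.twistedFree 𝒜 t d) (𝓜 d) := by
  intro f hf
  rw [Fintype.linearCombination_apply]
  refine sum_mem fun j _ => ?_
  rcases mem_shift.1 (mem_twistedFree.1 hf j) with h0 | ⟨hle, hfj⟩
  · rw [h0, zero_smul]
    exact zero_mem _
  · simpa only [Nat.sub_add_cancel hle] using h.smul_mem hfj (hv j)

theorem relationGrading [GradedRing 𝒜] (h : IsGradedModule 𝒜 𝓜) {ι : Type*} [Fintype ι]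
    {t : ι → ℕ} {v : ι → M} (hv : ∀ j, v j ∈ 𝓜 (t j)) :
    IsGradedModule 𝒜 (relationGrading 𝒜 t v) :=
  (twistedFree t).ker h (h.mapsTo_linearCombination hv)

end IsGradedModule

end GradedModule

section ShortExact

variable {R : Type u} [CommRing R] {A B C : Type u} [AddCommGroup A] [AddCommGroup B]
  [AddCommGroup C] [Module R A] [Module R B] [Module R C] {𝒜 : ℕ → AddSubgroup R}
  {𝓐 : ℕ → AddSubgroup A} {𝓑 : ℕ → AddSubgroup B} {𝓒 : ℕ → AddSubgroup C}

/-- The maps `i` and `p` form a short exact sequence `0 → A → B → C → 0` of modules and preserve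
the degrees of the families `𝓐`, `𝓑` and `𝓒`. -/
structure GradedShortExact (𝓐 : ℕ → AddSubgroup A) (𝓑 : ℕ → AddSubgroup B)
    (𝓒 : ℕ → AddSubgroup C) (i : A →ₗ[R] B) (p : B →ₗ[R] C) : Prop where
  injective : Function.Injective i
  exact : Function.Exact i p
  surjective : Function.Surjective p
  mapsTo_left : ∀ d, Set.MapsTo i (𝓐 d) (𝓑 d)
  mapsTo_right : ∀ d, Set.MapsTo p (𝓑 d) (𝓒 d)

section Append

variable {m n : ℕ}

theorem append_comp_castAdd {α : Type*} (f : Fin m → α) (g : Fin n → α) :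
    Fin.append f g ∘ Fin.castAdd n = f :=
  funext fun j => Fin.append_left f g j

theorem append_comp_natAdd {α : Type*} (f : Fin m → α) (g : Fin n → α) :
    Fin.append f g ∘ Fin.natAdd m = g :=
  funext fun j => Fin.append_right f g j

theorem linearCombination_append (v : Fin m → A) (w : Fin n → A) (f : Fin (m + n) → R) :
    Fintype.linearCombination R (Fin.append v w) f =
      Fintype.linearCombination R v (f ∘ Fin.castAdd n) +
        Fintype.linearCombination R w (f ∘ Fin.natAdd m) := by
  simp only [Fintype.linearCombination_apply, Fin.sum_univ_add, Fin.append_left, Fin.append_right,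
    Function.comp_apply]

theorem mem_twistedFree_append {s : Fin m → ℕ} {t : Fin n → ℕ} {f : Fin (m + n) → R} {d : ℕ} :
    f ∈ twistedFree 𝒜 (Fin.append s t) d ↔
      f ∘ Fin.castAdd n ∈ twistedFree 𝒜 s d ∧ f ∘ Fin.natAdd m ∈ twistedFree 𝒜 t d := by
  simp only [mem_twistedFree, Fin.forall_fin_add, Fin.append_left, Fin.append_right,
    Function.comp_apply]

/-- The first summand inclusion `R^m → R^(m+n)`. -/
def appendZero (R : Type u) [CommRing R] (m n : ℕ) : (Fin m → R) →ₗ[R] (Fin (m + n) → R) where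
  toFun f := Fin.append f 0
  map_add' f g := by
    funext j
    refine Fin.addCases (fun j => ?_) (fun j => ?_) j <;> simp
  map_smul' r f := by
    funext j
    refine Fin.addCases (fun j => ?_) (fun j => ?_) j <;> simp

theorem appendZero_apply (f : Fin m → R) : appendZero R m n f = Fin.append f 0 := rfl

end Append

theorem linearCombination_map_comp {ι : Type*} [Fintype ι] (f : A →ₗ[R] B) (v : ι → A)
    (x : ι → R) :
    Fintype.linearCombination R (f ∘ v) x = f (Fintype.linearCombination R v x) := by
  simp only [Fintype.linearCombination_apply, map_sum, map_smul, Function.comp_apply]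

section Relations

variable {i : A →ₗ[R] B} {p : B →ₗ[R] C} {m n : ℕ} {s : Fin m → ℕ} {t : Fin n → ℕ}

theorem linearCombination_append_map_comp (i : A →ₗ[R] B) (a : Fin m → A) (b : Fin n → B)
    (f : Fin (m + n) → R) :
    Fintype.linearCombination R (Fin.append (i ∘ a) b) f =
      i (Fintype.linearCombination R a (f ∘ Fin.castAdd n)) +
        Fintype.linearCombination R b (f ∘ Fin.natAdd m) := by
  rw [linearCombination_append, linearCombination_map_comp]

/-- Relations among the `a j`, viewed as relations among the `i (a j)` and the `b j`. -/
def relationsInl (i : A →ₗ[R] B) (a : Fin m → A) (b : Fin n → B) :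
    LinearMap.ker (Fintype.linearCombination R a) →ₗ[R]
      LinearMap.ker (Fintype.linearCombination R (Fin.append (i ∘ a) b)) :=
  (appendZero R m n).restrict fun f hf => by
    rw [LinearMap.mem_ker, linearCombination_append_map_comp, appendZero_apply,
      append_comp_castAdd, append_comp_natAdd, LinearMap.mem_ker.1 hf, map_zero, map_zero,
      add_zero]

/-- Relations among the `i (a j)` and the `b j`, pushed to relations among the `p (b j)`. -/
def relationsSnd (hip : Function.Exact i p) (a : Fin m → A) (b : Fin n → B) :
    LinearMap.ker (Fintype.linearCombination R (Fin.append (i ∘ a) b)) →ₗ[R]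
      LinearMap.ker (Fintype.linearCombination R (p ∘ b)) :=
  (LinearMap.funLeft R R (Fin.natAdd m)).restrict fun f hf => by
    have hpf := congrArg p ((linearCombination_append_map_comp i a b f).symm.trans hf)
    rw [map_add, hip.apply_apply_eq_zero, zero_add, map_zero] at hpf
    exact (linearCombination_map_comp p b _).trans hpf

theorem relationsInl_injective (a : Fin m → A) (b : Fin n → B) :
    Function.Injective (relationsInl i a b) := by
  intro f g hfg
  have hfg : Fin.append f.1 0 = Fin.append g.1 0 := congrArg Subtype.val hfg
  rw [Subtype.ext_iff, ← append_comp_castAdd f.1 (0 : Fin n → R), hfg, append_comp_castAdd]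

theorem exact_relationsInl_relationsSnd (hi : Function.Injective i) (hip : Function.Exact i p)
    (a : Fin m → A) (b : Fin n → B) :
    Function.Exact (relationsInl i a b) (relationsSnd hip a b) := by
  refine fun f => ⟨fun hf => ?_, ?_⟩
  · have hf0 : f.1 ∘ Fin.natAdd m = 0 := congrArg Subtype.val hf
    have hker : Fintype.linearCombination R a (f.1 ∘ Fin.castAdd n) = 0 := by
      have hf := (linearCombination_append_map_comp i a b f.1).symm.trans f.2
      rwa [hf0, map_zero, add_zero, map_eq_zero_iff i hi] at hf
    refine ⟨⟨_, hker⟩, Subtype.ext ?_⟩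
    change Fin.append (f.1 ∘ Fin.castAdd n) 0 = f.1
    rw [← hf0]
    exact Fin.append_castAdd_natAdd
  · rintro ⟨g, rfl⟩
    exact Subtype.ext (append_comp_natAdd g.1 0)

theorem relationsSnd_surjective (hip : Function.Exact i p) {a : Fin m → A}
    (ha : Function.Surjective (Fintype.linearCombination R a)) (b : Fin n → B) :
    Function.Surjective (relationsSnd hip a b) := by
  rintro ⟨g, hg⟩
  rw [LinearMap.mem_ker, linearCombination_map_comp] at hg
  obtain ⟨y, hy⟩ := (hip _).1 hg
  obtain ⟨f, rfl⟩ := ha y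
  refine ⟨⟨Fin.append (-f) g, ?_⟩, Subtype.ext (append_comp_natAdd (-f) g)⟩
  rw [LinearMap.mem_ker, linearCombination_append_map_comp, append_comp_castAdd,
    append_comp_natAdd, map_neg, map_neg, hy, neg_add_cancel]

theorem surjective_linearCombination_append (hip : Function.Exact i p) {a : Fin m → A}
    {b : Fin n → B} (ha : Function.Surjective (Fintype.linearCombination R a))
    (hb : Function.Surjective (Fintype.linearCombination R (p ∘ b))) :
    Function.Surjective (Fintype.linearCombination R (Fin.append (i ∘ a) b)) := by
  intro y
  obtain ⟨g, hg⟩ := hb (p y)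
  rw [linearCombination_map_comp] at hg
  obtain ⟨x, hx⟩ := (hip (y - Fintype.linearCombination R b g)).1 (by rw [map_sub, hg, sub_self])
  obtain ⟨f, rfl⟩ := ha x
  refine ⟨Fin.append f g, ?_⟩
  rw [linearCombination_append_map_comp, append_comp_castAdd, append_comp_natAdd, hx,
    sub_add_cancel]

theorem GradedShortExact.relations (h : GradedShortExact 𝓐 𝓑 𝓒 i p) {a : Fin m → A}
    (ha : Function.Surjective (Fintype.linearCombination R a)) (b : Fin n → B) :
    GradedShortExact (relationGrading 𝒜 s a)
      (relationGrading 𝒜 (Fin.append s t) (Fin.append (i ∘ a) b))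
      (relationGrading 𝒜 t (p ∘ b)) (relationsInl i a b) (relationsSnd h.exact a b) where
  injective := relationsInl_injective a b
  exact := exact_relationsInl_relationsSnd h.injective h.exact a b
  surjective := relationsSnd_surjective h.exact ha b
  mapsTo_left _ f hf := mem_twistedFree_append.2
    ⟨(append_comp_castAdd f.1 0).symm ▸ hf, (append_comp_natAdd f.1 0).symm ▸ zero_mem _⟩
  mapsTo_right _ _ hf := (mem_twistedFree_append.1 hf).2

end Relations

section Connecting

variable {i : A →ₗ[R] B} {p : B →ₗ[R] C} {m : ℕ} {t : Fin m → ℕ} {b : Fin m → B}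

theorem ker_linearCombination_le_ker_map_comp (p : B →ₗ[R] C) (b : Fin m → B) :
    LinearMap.ker (Fintype.linearCombination R b) ≤
      LinearMap.ker (Fintype.linearCombination R (p ∘ b)) := fun f hf => by
  rw [LinearMap.mem_ker, linearCombination_map_comp, LinearMap.mem_ker.1 hf, map_zero]

/-- A relation among the `p (b j)` gives a combination of the `b j` in the image of `A`. -/
noncomputable def connecting (hi : Function.Injective i) (hip : Function.Exact i p)
    (b : Fin m → B) : LinearMap.ker (Fintype.linearCombination R (p ∘ b)) →ₗ[R] A :=
  (LinearEquiv.ofInjective i hi).symm.toLinearMap ∘ₗ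
    (Fintype.linearCombination R b).restrict fun f hf =>
      (hip _).1 ((linearCombination_map_comp p b f).symm.trans hf)

theorem map_connecting (hi : Function.Injective i) (hip : Function.Exact i p) (b : Fin m → B)
    (f : LinearMap.ker (Fintype.linearCombination R (p ∘ b))) :
    i (connecting hi hip b f) = Fintype.linearCombination R b f :=
  congrArg Subtype.val ((LinearEquiv.ofInjective i hi).apply_symm_apply _)

theorem GradedShortExact.connecting (h : GradedShortExact 𝓐 𝓑 𝓒 i p)
    (h𝓐 : IsGradedModule 𝒜 𝓐) (h𝓑 : IsGradedModule 𝒜 𝓑) (hb : ∀ j, b j ∈ 𝓑 (t j))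
    (hbsurj : Function.Surjective (Fintype.linearCombination R b)) :
    GradedShortExact (relationGrading 𝒜 t b) (relationGrading 𝒜 t (p ∘ b)) 𝓐
      (Submodule.inclusion (ker_linearCombination_le_ker_map_comp p b))
      (connecting h.injective h.exact b) where
  injective := Submodule.inclusion_injective _
  exact f := by
    rw [← map_eq_zero_iff i h.injective, map_connecting]
    exact ⟨fun hf => ⟨⟨f, hf⟩, rfl⟩, fun ⟨g, hg⟩ => hg ▸ g.2⟩
  surjective y := by
    obtain ⟨f, hf⟩ := hbsurj (i y)
    have hker : Fintype.linearCombination R (p ∘ b) f = 0 := by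
      rw [linearCombination_map_comp, hf, h.exact.apply_apply_eq_zero]
    exact ⟨⟨f, hker⟩, h.injective ((map_connecting _ _ b _).trans hf)⟩
  mapsTo_left _ _ hf := hf
  mapsTo_right d f hf := by
    refine h𝓐.mem_of_apply_mem h𝓑 h.injective h.mapsTo_left ?_
    rw [map_connecting]
    exact h𝓑.mapsTo_linearCombination hb d hf

end Connecting

end ShortExact

section Resolution

variable {R : Type u} [CommRing R] {𝒜 : ℕ → AddSubgroup R} {M : Type u} [AddCommGroup M]
  [Module R M] {𝓜 : ℕ → AddSubgroup M}

/-- `M` has a free resolution by finitely generated graded free modules, of length less than `l`,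
whose generators in homological degree `i` have degrees at most `r + i`. It is recorded as a choice
of homogeneous generators of `M` and, recursively, a resolution of the relations among them. -/
def HasResolution (𝒜 : ℕ → AddSubgroup R) :
    ℕ → ℕ → ∀ {M : Type u} [AddCommGroup M] [Module R M], (ℕ → AddSubgroup M) → Prop
  | 0, _, M, _, _, _ => Subsingleton M
  | l + 1, r, M, _, _, 𝓜 => ∃ (m : ℕ) (t : Fin m → ℕ) (v : Fin m → M),
      (∀ j, v j ∈ 𝓜 (t j)) ∧ Function.Surjective (Fintype.linearCombination R v) ∧
        (∀ j, t j ≤ r) ∧ HasResolution 𝒜 l (r + 1) (relationGrading 𝒜 t v)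

/-- The graded module `M` has Castelnuovo–Mumford regularity at most `r`, as witnessed by a finite
graded free resolution. -/
def RegularityLE (𝒜 : ℕ → AddSubgroup R) (r : ℕ) (𝓜 : ℕ → AddSubgroup M) : Prop :=
  ∃ l, HasResolution 𝒜 l r 𝓜

namespace HasResolution

theorem of_subsingleton [hM : Subsingleton M] (l r : ℕ) : HasResolution 𝒜 l r 𝓜 := by
  induction l generalizing r M with
  | zero => exact hM
  | succ l ih => exact ⟨0, Fin.elim0, Fin.elim0, fun j => j.elim0,
      fun _ => ⟨0, Subsingleton.elim _ _⟩, fun j => j.elim0, ih (r + 1)⟩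

theorem mono {l l' r r' : ℕ} (hl : l ≤ l') (hr : r ≤ r') (h : HasResolution 𝒜 l r 𝓜) :
    HasResolution 𝒜 l' r' 𝓜 := by
  induction l generalizing l' r r' M with
  | zero =>
    have : Subsingleton M := h
    exact of_subsingleton l' r'
  | succ l ih =>
    obtain ⟨l', rfl⟩ := Nat.exists_eq_add_of_le' ((Nat.le_add_left 1 l).trans hl)
    obtain ⟨m, t, v, hv, hsurj, ht, hrel⟩ := h
    exact ⟨m, t, v, hv, hsurj, fun j => (ht j).trans hr,
      ih (Nat.le_of_succ_le_succ hl) (Nat.succ_le_succ hr) hrel⟩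

theorem shift {l r : ℕ} (h : HasResolution 𝒜 l r 𝓜) (k : ℕ) :
    HasResolution 𝒜 l (r + k) (shift 𝓜 k) := by
  induction l generalizing r M with
  | zero => exact h
  | succ l ih =>
    obtain ⟨m, t, v, hv, hsurj, ht, hrel⟩ := h
    refine ⟨m, fun j => t j + k, v, fun j => ?_, hsurj, fun j => Nat.add_le_add_right (ht j) k, ?_⟩
    · rw [shift_of_le (Nat.le_add_left k _), Nat.add_sub_cancel]
      exact hv j
    · have hgrading : relationGrading 𝒜 (fun j => t j + k) v =
          _root_.shift (relationGrading 𝒜 t v) k := by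
        unfold relationGrading restrictGrading
        rw [twistedFree_add, ← shift_comap Subtype.val_injective]
      rw [hgrading, Nat.add_right_comm]
      exact ih hrel

end HasResolution

section ShortExact

variable {A B C : Type u} [AddCommGroup A] [AddCommGroup B] [AddCommGroup C] [Module R A]
  [Module R B] [Module R C] {𝓐 : ℕ → AddSubgroup A} {𝓑 : ℕ → AddSubgroup B}
  {𝓒 : ℕ → AddSubgroup C} {i : A →ₗ[R] B} {p : B →ₗ[R] C} {l r : ℕ}

/-- The horseshoe lemma: generators of `A` and lifts of generators of `C` generate `B`, and the
relations again form a short exact sequence. -/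
theorem HasResolution.middle [GradedRing 𝒜] (h : GradedShortExact 𝓐 𝓑 𝓒 i p)
    (h𝓑 : IsGradedModule 𝒜 𝓑) (h𝓒 : IsGradedModule 𝒜 𝓒) (hA : HasResolution 𝒜 l r 𝓐)
    (hC : HasResolution 𝒜 l r 𝓒) : HasResolution 𝒜 l r 𝓑 := by
  induction l generalizing r A B C with
  | zero =>
    have : Subsingleton A := hA
    have : Subsingleton C := hC
    refine ⟨fun x y => ?_⟩
    obtain ⟨a, ha⟩ := (h.exact (x - y)).1 (Subsingleton.elim _ _)
    rwa [Subsingleton.elim a 0, map_zero, eq_comm, sub_eq_zero] at ha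
  | succ l ih =>
    obtain ⟨m, s, a, ha, hasurj, hs, hArel⟩ := hA
    obtain ⟨n, t, c, hc, hcsurj, ht, hCrel⟩ := hC
    choose b hb hpb using fun j =>
      h𝓑.exists_mem_apply_eq h𝓒 h.mapsTo_right (hc j) (h.surjective (c j))
    obtain rfl : p ∘ b = c := funext hpb
    have hab : ∀ j, Fin.append (i ∘ a) b j ∈ 𝓑 (Fin.append s t j) := by
      simpa only [Fin.forall_fin_add, Fin.append_left, Fin.append_right] using
        ⟨fun j => h.mapsTo_left _ (ha j), hb⟩
    refine ⟨m + n, Fin.append s t, Fin.append (i ∘ a) b, hab,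
      surjective_linearCombination_append h.exact hasurj hcsurj, ?_,
      ih (h.relations hasurj b) (h𝓑.relationGrading hab) (h𝓒.relationGrading hc) hArel hCrel⟩
    simpa only [Fin.forall_fin_add, Fin.append_left, Fin.append_right] using ⟨hs, ht⟩

/-- The mapping cone: relations among the images in `C` of generators of `B` form an extension of
`A` by the relations among these generators. -/
theorem HasResolution.right [GradedRing 𝒜] (h : GradedShortExact 𝓐 𝓑 𝓒 i p)
    (h𝓐 : IsGradedModule 𝒜 𝓐) (h𝓑 : IsGradedModule 𝒜 𝓑) (h𝓒 : IsGradedModule 𝒜 𝓒)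
    (hA : HasResolution 𝒜 l (r + 1) 𝓐) (hB : HasResolution 𝒜 (l + 1) r 𝓑) :
    HasResolution 𝒜 (l + 1) r 𝓒 := by
  obtain ⟨m, t, b, hb, hbsurj, ht, hBrel⟩ := hB
  have hpb : ∀ j, p (b j) ∈ 𝓒 (t j) := fun j => h.mapsTo_right _ (hb j)
  refine ⟨m, t, p ∘ b, hpb, fun z => ?_, ht, HasResolution.middle
    (h.connecting h𝓐 h𝓑 hb hbsurj) (h𝓒.relationGrading hpb) h𝓐 hBrel hA⟩
  obtain ⟨y, rfl⟩ := h.surjective z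
  obtain ⟨f, rfl⟩ := hbsurj y
  exact ⟨f, linearCombination_map_comp p b f⟩

theorem RegularityLE.middle [GradedRing 𝒜] (h : GradedShortExact 𝓐 𝓑 𝓒 i p)
    (h𝓑 : IsGradedModule 𝒜 𝓑) (h𝓒 : IsGradedModule 𝒜 𝓒) :
    RegularityLE 𝒜 r 𝓐 → RegularityLE 𝒜 r 𝓒 → RegularityLE 𝒜 r 𝓑 := by
  rintro ⟨l, hA⟩ ⟨l', hC⟩
  exact ⟨max l l', .middle h h𝓑 h𝓒 (hA.mono (le_max_left _ _) le_rfl)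
    (hC.mono (le_max_right _ _) le_rfl)⟩

theorem RegularityLE.right [GradedRing 𝒜] (h : GradedShortExact 𝓐 𝓑 𝓒 i p)
    (h𝓐 : IsGradedModule 𝒜 𝓐) (h𝓑 : IsGradedModule 𝒜 𝓑) (h𝓒 : IsGradedModule 𝒜 𝓒) :
    RegularityLE 𝒜 (r + 1) 𝓐 → RegularityLE 𝒜 r 𝓑 → RegularityLE 𝒜 r 𝓒 := by
  rintro ⟨l, hA⟩ ⟨l', hB⟩
  exact ⟨max l l' + 1, .right h h𝓐 h𝓑 h𝓒 (hA.mono (le_max_left _ _) le_rfl)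
    (hB.mono ((le_max_right _ _).trans (Nat.le_succ _)) le_rfl)⟩

theorem RegularityLE.mono {r' : ℕ} (hr : r ≤ r') : RegularityLE 𝒜 r 𝓐 → RegularityLE 𝒜 r' 𝓐 :=
  fun ⟨l, h⟩ => ⟨l, h.mono le_rfl hr⟩

theorem RegularityLE.shift (k : ℕ) :
    RegularityLE 𝒜 r 𝓐 → RegularityLE 𝒜 (r + k) (shift 𝓐 k) :=
  fun ⟨l, h⟩ => ⟨l, h.shift k⟩

end ShortExact

end Resolution

section Quotient

variable {R : Type u} [CommRing R] {𝒜 : ℕ → AddSubgroup R} {I J : Ideal R} {x : R} {k r : ℕ}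

/-- The grading of `R ⧸ I` by the classes of the homogeneous elements of `R`. -/
def quotientGrading (𝒜 : ℕ → AddSubgroup R) (I : Ideal R) (d : ℕ) : AddSubgroup (R ⧸ I) :=
  (𝒜 d).map (Submodule.mkQ I).toAddMonoidHom

theorem isGradedModule_quotientGrading [GradedRing 𝒜] (hI : I.IsHomogeneous 𝒜) :
    IsGradedModule 𝒜 (quotientGrading 𝒜 I) :=
  IsGradedModule.self.map_of_surjective I.mkQ_surjective (isComponents_decompose 𝒜) fun d y hy => by
    rw [Submodule.ker_mkQ] at hy
    exact (Submodule.Quotient.mk_eq_zero I).2 (hI d hy)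

theorem isHomogeneous_sup_span_singleton [GradedRing 𝒜] (hI : I.IsHomogeneous 𝒜) (hx : x ∈ 𝒜 k) :
    (I ⊔ Ideal.span {x}).IsHomogeneous 𝒜 :=
  hI.sup (Ideal.homogeneous_span 𝒜 _ fun _ hy => ⟨k, Set.mem_singleton_iff.1 hy ▸ hx⟩)

/-- Multiplication by `x` as a map `R ⧸ J → R ⧸ I`, where `J` is the colon ideal `I : x`. -/
def colonMul (hJ : ∀ f, x * f ∈ I ↔ f ∈ J) : (R ⧸ J) →ₗ[R] R ⧸ I :=
  J.mapQ I (LinearMap.mulLeft R x) fun f hf => (hJ f).2 hf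

theorem gradedShortExact_colonMul [GradedRing 𝒜] (hx : x ∈ 𝒜 k) (hJ : ∀ f, x * f ∈ I ↔ f ∈ J) :
    GradedShortExact (shift (quotientGrading 𝒜 J) k) (quotientGrading 𝒜 I)
      (quotientGrading 𝒜 (I ⊔ Ideal.span {x})) (colonMul hJ)
      (Submodule.factor (le_sup_left : I ≤ I ⊔ Ideal.span {x})) where
  injective := by
    refine (injective_iff_map_eq_zero _).2 fun y => ?_
    obtain ⟨f, rfl⟩ := J.mkQ_surjective y
    exact fun hf => (Submodule.Quotient.mk_eq_zero J).2
      ((hJ f).1 ((Submodule.Quotient.mk_eq_zero I).1 hf))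
  exact y := by
    obtain ⟨f, rfl⟩ := I.mkQ_surjective y
    constructor
    · intro hf
      obtain ⟨g, hg, _, hxh, rfl⟩ := Submodule.mem_sup.1 ((Submodule.Quotient.mk_eq_zero _).1 hf)
      obtain ⟨h, rfl⟩ := Ideal.mem_span_singleton.1 hxh
      refine ⟨J.mkQ h, (Submodule.Quotient.eq I).2 ?_⟩
      change x * h - (g + x * h) ∈ I
      rwa [sub_add_cancel_right, neg_mem_iff]
    · rintro ⟨z, hz⟩
      obtain ⟨h, rfl⟩ := J.mkQ_surjective z
      rw [← hz]
      exact (Submodule.Quotient.mk_eq_zero _).2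
        (Ideal.mem_sup_right (Ideal.mul_mem_right h _ (Ideal.mem_span_singleton_self x)))
  surjective := Submodule.factor_surjective _
  mapsTo_left d y hy := by
    rcases mem_shift.1 hy with rfl | ⟨hkd, f, hf, rfl⟩
    · rw [map_zero]
      exact zero_mem _
    · exact ⟨x * f, Nat.add_sub_cancel' hkd ▸ SetLike.mul_mem_graded hx hf, rfl⟩
  mapsTo_right d := by
    rintro _ ⟨f, hf, rfl⟩
    exact ⟨f, hf, rfl⟩

theorem regularityLE_quotient_of_colon [GradedRing 𝒜] (hI : I.IsHomogeneous 𝒜) (hx : x ∈ 𝒜 k)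
    (hJ : ∀ f, x * f ∈ I ↔ f ∈ J) (hrJ : RegularityLE 𝒜 r (quotientGrading 𝒜 J))
    (hrx : RegularityLE 𝒜 (r + k) (quotientGrading 𝒜 (I ⊔ Ideal.span {x}))) :
    RegularityLE 𝒜 (r + k) (quotientGrading 𝒜 I) :=
  .middle (gradedShortExact_colonMul hx hJ) (isGradedModule_quotientGrading hI)
    (isGradedModule_quotientGrading (isHomogeneous_sup_span_singleton hI hx)) (hrJ.shift k) hrx

theorem regularityLE_quotient_sup_of_isRegular [GradedRing 𝒜] (hI : I.IsHomogeneous 𝒜)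
    (hx : x ∈ 𝒜 1) (hreg : ∀ f, x * f ∈ I ↔ f ∈ I)
    (hr : RegularityLE 𝒜 r (quotientGrading 𝒜 I)) :
    RegularityLE 𝒜 r (quotientGrading 𝒜 (I ⊔ Ideal.span {x})) :=
  .right (gradedShortExact_colonMul hx hreg) ((isGradedModule_quotientGrading hI).shift 1)
    (isGradedModule_quotientGrading hI)
    (isGradedModule_quotientGrading (isHomogeneous_sup_span_singleton hI hx)) (hr.shift 1) hr

theorem regularityLE_quotient_bot [GradedRing 𝒜] :
    RegularityLE 𝒜 0 (quotientGrading 𝒜 (⊥ : Ideal R)) := by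
  have hmk : ∀ f : Fin 1 → R, Fintype.linearCombination R (fun _ => Submodule.mkQ (⊥ : Ideal R) 1) f
      = Submodule.mkQ ⊥ (f 0) := fun f => by
    rw [Fintype.linearCombination_apply, Fin.sum_univ_one, ← map_smul, smul_eq_mul, mul_one]
  refine ⟨1, 1, fun _ => 0, fun _ => Submodule.mkQ ⊥ 1,
    fun _ => ⟨1, SetLike.one_mem_graded 𝒜, rfl⟩, fun y => ?_, fun _ => le_rfl, ?_⟩
  · obtain ⟨f, rfl⟩ := Submodule.mkQ_surjective ⊥ y
    exact ⟨fun _ => f, hmk _⟩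
  · refine (Submodule.subsingleton_iff_eq_bot).2 (LinearMap.ker_eq_bot'.2 fun f hf => ?_)
    rw [hmk] at hf
    exact funext (Fin.forall_fin_one.2 ((Submodule.Quotient.mk_eq_zero ⊥).1 hf))

end Quotient

section Polynomial

variable {σ K : Type*} [CommRing K]

/-- The homogeneous polynomials of degree `d`, as an additive subgroup. -/
noncomputable abbrev homogeneousSubgroup (σ K : Type*) [CommRing K] (d : ℕ) :
    AddSubgroup (MvPolynomial σ K) :=
  (homogeneousSubmodule σ K d).toAddSubgroup

attribute [local instance] MvPolynomial.gradedAlgebra in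
noncomputable instance : GradedRing (homogeneousSubgroup σ K) where
  one_mem := isHomogeneous_one σ K
  mul_mem _ _ _ _ := IsHomogeneous.mul
  decompose' := DirectSum.decompose (homogeneousSubmodule σ K)
  left_inv := DirectSum.Decomposition.left_inv (ℳ := homogeneousSubmodule σ K)
  right_inv := DirectSum.Decomposition.right_inv (ℳ := homogeneousSubmodule σ K)

end Polynomial

section EdgeIdeal

variable {K : Type} [Field K] {V : Type} {G : SimpleGraph V} {S : Set V} {x y : V} {r : ℕ}

/-- The ideal generated by the edge ideal of `G` and the variables outside `S`. The quotient by it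
is `K[S] / I(G[S])`, so that induced subgraphs are treated without changing the ring. -/
noncomputable def inducedEdgeIdeal (K : Type) [Field K] (G : SimpleGraph V) (S : Set V) :
    Ideal (MvPolynomial V K) :=
  graphIdeal K G ⊔ Ideal.span (X '' Sᶜ)

theorem inducedEdgeIdeal_univ (G : SimpleGraph V) :
    inducedEdgeIdeal K G Set.univ = graphIdeal K G := by
  rw [inducedEdgeIdeal, Set.compl_univ, Set.image_empty, Ideal.span_empty, sup_bot_eq]

theorem inducedEdgeIdeal_sup_span_X (G : SimpleGraph V) (S : Set V) (x : V) :
    inducedEdgeIdeal K G S ⊔ Ideal.span {X x} = inducedEdgeIdeal K G (S \ {x}) := by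
  rw [inducedEdgeIdeal, inducedEdgeIdeal, sup_assoc, ← Ideal.span_union, ← Set.image_singleton,
    ← Set.image_union, Set.sdiff_eq, Set.compl_inter, compl_compl]

theorem isHomogeneous_inducedEdgeIdeal (G : SimpleGraph V) (S : Set V) :
    (inducedEdgeIdeal K G S).IsHomogeneous (homogeneousSubgroup V K) := by
  refine (Ideal.homogeneous_span _ _ ?_).sup (Ideal.homogeneous_span _ _ ?_)
  · rintro _ ⟨u, v, -, rfl⟩
    exact ⟨2, (isHomogeneous_X K u).mul (isHomogeneous_X K v)⟩
  · rintro _ ⟨v, -, rfl⟩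
    exact ⟨1, isHomogeneous_X K v⟩

theorem single_one_le_iff {α : Type*} {v : α} {m : α →₀ ℕ} :
    Finsupp.single v 1 ≤ m ↔ v ∈ m.support := by
  rw [Finsupp.single_le_iff, Nat.one_le_iff_ne_zero, Finsupp.mem_support_iff]

theorem single_add_single_le_iff {α : Type*} {u v : α} (huv : u ≠ v) {m : α →₀ ℕ} :
    Finsupp.single u 1 + Finsupp.single v 1 ≤ m ↔ u ∈ m.support ∧ v ∈ m.support := by
  classical
  constructor
  · exact fun h => ⟨single_one_le_iff.1 (le_self_add.trans h),
      single_one_le_iff.1 (le_add_self.trans h)⟩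
  · rintro ⟨hu, hv⟩ w
    rw [Finsupp.mem_support_iff] at hu hv
    rw [Finsupp.add_apply, Finsupp.single_apply, Finsupp.single_apply]
    grind

theorem inducedEdgeIdeal_eq_span_monomial (G : SimpleGraph V) (S : Set V) :
    inducedEdgeIdeal K G S = Ideal.span ((fun m => monomial m (1 : K)) ''
      ({m | ∃ u v, G.Adj u v ∧ m = Finsupp.single u 1 + Finsupp.single v 1} ∪
        (fun v => Finsupp.single v 1) '' Sᶜ)) := by
  rw [Set.image_union, Ideal.span_union, inducedEdgeIdeal, graphIdeal, Set.image_image]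
  congr 2
  ext f
  constructor
  · rintro ⟨u, v, huv, rfl⟩
    exact ⟨_, ⟨u, v, huv, rfl⟩, by simp only [X, monomial_mul, one_mul]⟩
  · rintro ⟨_, ⟨u, v, huv, rfl⟩, rfl⟩
    exact ⟨u, v, huv, by simp only [X, monomial_mul, one_mul]⟩

theorem mem_inducedEdgeIdeal {f : MvPolynomial V K} :
    f ∈ inducedEdgeIdeal K G S ↔
      ∀ m ∈ f.support, ¬((m.support : Set V) ⊆ S ∧ G.IsIndepSet m.support) := by
  rw [inducedEdgeIdeal_eq_span_monomial, mem_ideal_span_monomial_image]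
  refine forall₂_congr fun m _ => ?_
  constructor
  · rintro ⟨_, ⟨u, v, huv, rfl⟩ | ⟨v, hv, rfl⟩, hle⟩ ⟨hS, hindep⟩
    · obtain ⟨hu, hv⟩ := (single_add_single_le_iff huv.ne).1 hle
      exact hindep hu hv huv.ne huv
    · exact hv (hS (single_one_le_iff.1 hle))
  · intro h
    by_contra! hno
    refine h ⟨fun v hv => ?_, fun u hu v hv huv hadj => ?_⟩
    · by_contra hvS
      exact hno _ (Or.inr ⟨v, hvS, rfl⟩) (single_one_le_iff.2 hv)
    · exact hno _ (Or.inl ⟨u, v, hadj, rfl⟩) ((single_add_single_le_iff huv).2 ⟨hu, hv⟩)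

theorem X_mul_mem_inducedEdgeIdeal (hx : x ∈ S) {f : MvPolynomial V K} :
    X x * f ∈ inducedEdgeIdeal K G S ↔ f ∈ inducedEdgeIdeal K G (S \ G.neighborSet x) := by
  classical
  simp only [mem_inducedEdgeIdeal, support_X_mul, Finset.forall_mem_map]
  refine forall₂_congr fun m _ => not_congr ?_
  have hsupp : ((addLeftEmbedding (Finsupp.single x 1) m).support : Set V) =
      insert x (m.support : Set V) := by
    ext v
    by_cases hvx : v = x <;> simp [hvx]
  have hsymm : Std.Symm fun u v => ¬G.Adj u v := ⟨fun _ _ h h' => h h'.symm⟩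
  rw [hsupp, Set.insert_subset_iff, SimpleGraph.IsIndepSet, Set.pairwise_insert_of_symm]
  have hadj : (∀ v ∈ (m.support : Set V), x ≠ v → ¬G.Adj x v) ↔
      Disjoint (m.support : Set V) (G.neighborSet x) :=
    ⟨fun h => Set.disjoint_left.2 fun v hv hxv => h v hv hxv.ne hxv,
      fun h v hv _ => Set.disjoint_left.1 h hv⟩
  rw [hadj, Set.subset_sdiff, SimpleGraph.IsIndepSet]
  tauto

theorem inducedEdgeIdeal_eq_inducedEdgeIdeal_bot (hS : G.IsIndepSet S) :
    inducedEdgeIdeal K G S = inducedEdgeIdeal K ⊥ S := by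
  ext f
  rw [mem_inducedEdgeIdeal, mem_inducedEdgeIdeal]
  refine forall₂_congr fun m _ => not_congr (and_congr_right fun hm => ?_)
  exact ⟨fun _ _ _ _ _ _ => id, fun _ => hS.mono hm⟩

theorem isIndepSet_sep_of_insert [DecidableEq V] {T : Set V} {e : Sym2 V} {M : Finset (Sym2 V)}
    (hS : G.IsIndepSet {v ∈ S | ∀ f ∈ insert e M, v ∉ f}) (hTS : T ⊆ S)
    (hT : ∀ u ∈ T, ∀ v ∈ T, G.Adj u v → u ∉ e) : G.IsIndepSet {v ∈ T | ∀ f ∈ M, v ∉ f} := by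
  rintro u ⟨huT, hu⟩ v ⟨hvT, hv⟩ huv hadj
  exact hS ⟨hTS huT, Finset.forall_mem_insert e M _ |>.2 ⟨hT u huT v hvT hadj, hu⟩⟩
    ⟨hTS hvT, Finset.forall_mem_insert e M _ |>.2 ⟨hT v hvT u huT hadj.symm, hv⟩⟩ huv hadj

/-- The quotient `K[S] / I(G[S])` has regularity at most `r`. -/
abbrev InducedRegularityLE (K : Type) [Field K] (G : SimpleGraph V) (S : Set V) (r : ℕ) : Prop :=
  RegularityLE (homogeneousSubgroup V K) r
    (quotientGrading (homogeneousSubgroup V K) (inducedEdgeIdeal K G S))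

namespace InducedRegularityLE

theorem of_vertex (hcolon : InducedRegularityLE K G (S \ G.neighborSet x) r)
    (hdelete : InducedRegularityLE K G (S \ {x}) (r + 1)) :
    InducedRegularityLE K G S (r + 1) := by
  by_cases hx : x ∈ S
  · refine regularityLE_quotient_of_colon (isHomogeneous_inducedEdgeIdeal G S)
      (isHomogeneous_X K x) (fun f => X_mul_mem_inducedEdgeIdeal hx) hcolon ?_
    rwa [inducedEdgeIdeal_sup_span_X]
  · rwa [Set.sdiff_singleton_eq_self hx] at hdelete

theorem of_two_vertices (hx : InducedRegularityLE K G (S \ G.neighborSet x) r)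
    (hy : InducedRegularityLE K G ((S \ {x}) \ G.neighborSet y) r)
    (hxy : InducedRegularityLE K G ((S \ {x}) \ {y}) r) : InducedRegularityLE K G S (r + 1) :=
  of_vertex hx (of_vertex hy (hxy.mono r.le_succ))

theorem zero_of_bot [Finite V] (S : Set V) : InducedRegularityLE K (⊥ : SimpleGraph V) S 0 := by
  suffices h : ∀ T : Set V, InducedRegularityLE K (⊥ : SimpleGraph V) Tᶜ 0 by
    simpa only [compl_compl] using h Sᶜ
  intro T
  induction T, T.toFinite using Set.Finite.induction_on with
  | empty =>
    have hbot : inducedEdgeIdeal K (⊥ : SimpleGraph V) ∅ᶜ = ⊥ := by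
      simp [inducedEdgeIdeal, graphIdeal]
    rw [InducedRegularityLE, hbot]
    exact regularityLE_quotient_bot
  | @insert v T hv _ ih =>
    have hcompl : (insert v T)ᶜ = Tᶜ \ {v} := by
      rw [Set.insert_eq, Set.compl_union, Set.inter_comm, Set.sdiff_eq]
    have hreg : ∀ f, X v * f ∈ inducedEdgeIdeal K ⊥ Tᶜ ↔ f ∈ inducedEdgeIdeal K ⊥ Tᶜ := fun f => by
      rw [X_mul_mem_inducedEdgeIdeal hv, SimpleGraph.neighborSet_bot, Set.sdiff_empty]
    rw [InducedRegularityLE, hcompl, ← inducedEdgeIdeal_sup_span_X]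
    exact regularityLE_quotient_sup_of_isRegular (isHomogeneous_inducedEdgeIdeal ⊥ Tᶜ)
      (isHomogeneous_X K v) hreg ih

theorem zero_of_isIndepSet [Finite V] (hS : G.IsIndepSet S) : InducedRegularityLE K G S 0 := by
  rw [InducedRegularityLE, inducedEdgeIdeal_eq_inducedEdgeIdeal_bot hS]
  exact zero_of_bot S

theorem card_of_isIndepSet [Finite V] {M : Finset (Sym2 V)} (hM : ∀ e ∈ M, e ∈ G.edgeSet)
    (hS : G.IsIndepSet {v ∈ S | ∀ e ∈ M, v ∉ e}) : InducedRegularityLE K G S M.card := by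
  classical
  induction M using Finset.induction_on generalizing S with
  | empty => exact zero_of_isIndepSet (by
      simpa only [Finset.notMem_empty, false_imp_iff, implies_true, and_true, Set.ofPred_mem_eq]
        using hS)
  | insert e M he ih =>
    induction e with | _ x y
    have hxy : G.Adj x y := hM _ (Finset.mem_insert_self _ _)
    have hle : ∀ T ⊆ S, (∀ u ∈ T, ∀ v ∈ T, G.Adj u v → u ∉ s(x, y)) →
        InducedRegularityLE K G T M.card := fun T hTS hT =>
      ih (fun f hf => hM f (Finset.mem_insert_of_mem hf)) (isIndepSet_sep_of_insert hS hTS hT)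
    rw [Finset.card_insert_of_notMem he]
    refine of_two_vertices (x := x) (y := y) (hle _ Set.sdiff_subset fun u hu v hv huv => ?_)
      (hle _ (Set.sdiff_subset.trans Set.sdiff_subset) fun u hu v hv huv => ?_)
      (hle _ (Set.sdiff_subset.trans Set.sdiff_subset) fun u hu _ _ _ => ?_)
    all_goals
      rw [Sym2.mem_iff, not_or]
    · exact ⟨fun h => hv.2 (h ▸ huv), fun h => hu.2 (h ▸ hxy)⟩
    · exact ⟨hu.1.2, fun h => hv.2 (h ▸ huv)⟩
    · exact ⟨hu.1.2, hu.2⟩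

end InducedRegularityLE

end EdgeIdeal

section Matching

variable {V : Type} [DecidableEq V] {G : SimpleGraph V} {M : Finset (Sym2 V)}

theorem isMatchingSet_insert {e : Sym2 V} (hM : G.IsMatchingSet M) (he : e ∈ G.edgeSet)
    (hdisj : ∀ f ∈ M, ∀ v ∈ e, v ∉ f) : G.IsMatchingSet (insert e M) := by
  refine ⟨Finset.forall_mem_insert _ _ _ |>.2 ⟨he, hM.1⟩, fun f hf g hg hfg v hv => ?_⟩
  rcases Finset.mem_insert.1 hf with rfl | hfM <;> rcases Finset.mem_insert.1 hg with rfl | hgM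
  · exact hfg rfl
  · exact hdisj g hgM v hv.1 hv.2
  · exact hdisj f hfM v hv.2 hv.1
  · exact hM.2 f hfM g hgM hfg v hv

theorem isIndepSet_unmatched (hM : G.IsMaximalMatchingSet M) :
    G.IsIndepSet {v | ∀ e ∈ M, v ∉ e} := by
  intro u hu v hv _ huv
  refine hM.2 s(u, v) huv (fun he => hu _ he (Sym2.mem_mk_left u v))
    (isMatchingSet_insert hM.1 huv fun e he w hw => ?_)
  rcases Sym2.mem_iff.1 hw with rfl | rfl
  exacts [hu e he, hv e he]

theorem exists_isMaximalMatchingSet [Finite V] (G : SimpleGraph V) :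
    ∃ M, G.IsMaximalMatchingSet M := by
  have hempty : G.IsMatchingSet ∅ := by
    simp only [SimpleGraph.IsMatchingSet, Finset.notMem_empty, false_imp_iff, implies_true,
      and_self]
  obtain ⟨M, hM, hmax⟩ := {M | G.IsMatchingSet M}.toFinite.exists_maximal ⟨∅, hempty⟩
  exact ⟨M, hM, fun e _ heM he => heM (hmax he (Finset.subset_insert e M)
    (Finset.mem_insert_self e M))⟩

theorem exists_isMaximalMatchingSet_card_eq_betaPrime [Finite V] (G : SimpleGraph V) :
    ∃ M, G.IsMaximalMatchingSet M ∧ M.card = betaPrime G := by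
  obtain ⟨M, hM⟩ := exists_isMaximalMatchingSet G
  exact Nat.sInf_mem (s := {k | ∃ M, G.IsMaximalMatchingSet M ∧ M.card = k}) ⟨M.card, M, hM, rfl⟩

end Matching

section FreeResolution

variable {R : Type u} [CommRing R] {𝒜 : ℕ → AddSubgroup R} {M : Type u} [AddCommGroup M]
  [Module R M] {𝓜 : ℕ → AddSubgroup M} {l r : ℕ}

/-- A resolution of the graded module `M` by the free modules `⨁ j, R(-twist i j)`, with terms only
in homological degrees `i < l` and with `twist i j ≤ r + i`: the sequence of modules and maps behind
`HasResolution`. -/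
structure GradedFreeResolution (𝒜 : ℕ → AddSubgroup R) (l r : ℕ) (𝓜 : ℕ → AddSubgroup M) where
  rank : ℕ → ℕ
  rank_eq_zero : ∀ i, l ≤ i → rank i = 0
  twist : (i : ℕ) → Fin (rank i) → ℕ
  twist_le : ∀ i j, twist i j ≤ r + i
  d : (i : ℕ) → (Fin (rank (i + 1)) → R) →ₗ[R] Fin (rank i) → R
  d_single_mem : ∀ i j, d i (Pi.single j 1) ∈ twistedFree 𝒜 (twist i) (twist (i + 1) j)
  aug : (Fin (rank 0) → R) →ₗ[R] M
  aug_single_mem : ∀ j, aug (Pi.single j 1) ∈ 𝓜 (twist 0 j)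
  aug_surjective : Function.Surjective aug
  range_d_zero : LinearMap.range (d 0) = LinearMap.ker aug
  range_d_succ : ∀ i, LinearMap.range (d (i + 1)) = LinearMap.ker (d i)

namespace GradedFreeResolution

/-- The resolution without terms of the zero module. -/
def ofSubsingleton [Subsingleton M] : GradedFreeResolution 𝒜 0 r 𝓜 where
  rank _ := 0
  rank_eq_zero _ _ := rfl
  twist _ := Fin.elim0
  twist_le _ j := j.elim0
  d _ := 0
  d_single_mem _ j := j.elim0
  aug := 0
  aug_single_mem j := j.elim0
  aug_surjective _ := ⟨0, Subsingleton.elim _ _⟩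
  range_d_zero := Subsingleton.elim _ _
  range_d_succ _ := Subsingleton.elim _ _

/-- Prepends a choice of homogeneous generators to a resolution of the relations among them. -/
def cons {m : ℕ} {t : Fin m → ℕ} {v : Fin m → M} (hv : ∀ j, v j ∈ 𝓜 (t j))
    (hsurj : Function.Surjective (Fintype.linearCombination R v)) (ht : ∀ j, t j ≤ r)
    (P : GradedFreeResolution 𝒜 l (r + 1) (relationGrading 𝒜 t v)) :
    GradedFreeResolution 𝒜 (l + 1) r 𝓜 where
  rank i := i.casesOn m P.rank
  rank_eq_zero
    | i + 1, hi => P.rank_eq_zero i (Nat.le_of_succ_le_succ hi)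
  twist
    | 0 => t
    | i + 1 => P.twist i
  twist_le
    | 0, j => ht j
    | i + 1, j => (P.twist_le i j).trans_eq (Nat.succ_add_eq_add_succ r i)
  d
    | 0 => (Submodule.subtype _).comp P.aug
    | i + 1 => P.d i
  d_single_mem
    | 0, j => P.aug_single_mem j
    | i + 1, j => P.d_single_mem i j
  aug := Fintype.linearCombination R v
  aug_single_mem j := by
    rw [Fintype.linearCombination_apply_single, one_smul]
    exact hv j
  aug_surjective := hsurj
  range_d_zero :=
    (LinearMap.range_comp_of_range_eq_top _ (LinearMap.range_eq_top.2 P.aug_surjective)).trans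
      (Submodule.range_subtype _)
  range_d_succ
    | 0 => P.range_d_zero.trans
        (LinearMap.ker_comp_of_ker_eq_bot _ (Submodule.ker_subtype _)).symm
    | i + 1 => P.range_d_succ i

theorem nonempty_of_hasResolution (h : HasResolution 𝒜 l r 𝓜) :
    Nonempty (GradedFreeResolution 𝒜 l r 𝓜) := by
  induction l generalizing r M with
  | zero =>
    have : Subsingleton M := h
    exact ⟨ofSubsingleton⟩
  | succ l ih =>
    obtain ⟨m, t, v, hv, hsurj, ht, hrel⟩ := h
    exact (ih hrel).map (cons hv hsurj ht)

end GradedFreeResolution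

end FreeResolution

section Regularity

variable {n r : ℕ} {K : Type} [Field K] {I : Ideal (MvPolynomial (Fin n) K)}

theorem GradedFreeResolution.exists_gfr {l : ℕ} (P : GradedFreeResolution
    (homogeneousSubgroup (Fin n) K) l r (quotientGrading (homogeneousSubgroup (Fin n) K) I)) :
    ∃ F : GFR n K I, ∀ i (j : Fin (F.rk i)), F.tw i j ≤ r + i := by
  choose v hv hvP using P.aug_single_mem
  have haug : I.mkQ.comp (Fintype.linearCombination (MvPolynomial (Fin n) K) v) = P.aug :=
    LinearMap.pi_ext' fun j => LinearMap.ext_ring <| by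
      simp only [LinearMap.comp_apply, LinearMap.single_apply,
        Fintype.linearCombination_apply_single, one_smul]
      exact hvP j
  refine ⟨{
    len := l
    rk := P.rank
    rk_zero := fun i hi => P.rank_eq_zero i hi.le
    tw := P.twist
    δ := P.d
    δ_homog := fun i k j => mem_shift.1 (mem_twistedFree.1 (P.d_single_mem i k) j)
    aug := Fintype.linearCombination (MvPolynomial (Fin n) K) v
    aug_homog := fun j => ?_
    aug_surj := fun f => ?_
    exact_zero := ?_
    exact_succ := P.range_d_succ }, P.twist_le⟩
  · rw [Fintype.linearCombination_apply_single, one_smul]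
    exact hv j
  · obtain ⟨g, hg⟩ := P.aug_surjective (I.mkQ f)
    rw [← haug] at hg
    exact ⟨g, (Submodule.Quotient.eq I).1 hg.symm⟩
  · rw [P.range_d_zero, ← haug, LinearMap.ker_comp, Submodule.ker_mkQ]

theorem regR_le_of_regularityLE (h : RegularityLE (homogeneousSubgroup (Fin n) K) r
    (quotientGrading (homogeneousSubgroup (Fin n) K) I)) : regR I ≤ r := by
  obtain ⟨l, hl⟩ := h
  obtain ⟨P⟩ := GradedFreeResolution.nonempty_of_hasResolution hl
  exact Nat.sInf_le P.exists_gfr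

end Regularity

/-- For any graph `G`, `reg(R/I(G)) ≤ β'(G)`, the minimum size of a
maximal matching of `G`. -/
theorem stmt_8 (K : Type) [Field K] {n : ℕ} (G : SimpleGraph (Fin n)) :
    regR (graphIdeal K G) ≤ betaPrime G := by
  obtain ⟨M, hM, hcard⟩ := exists_isMaximalMatchingSet_card_eq_betaPrime G
  have hindep : G.IsIndepSet {v ∈ Set.univ | ∀ e ∈ M, v ∉ e} := by
    simpa only [Set.sep_univ] using isIndepSet_unmatched hM
  have hreg : InducedRegularityLE K G Set.univ M.card := .card_of_isIndepSet hM.1.1 hindep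
  rw [InducedRegularityLE, inducedEdgeIdeal_univ] at hreg
  exact hcard ▸ regR_le_of_regularityLE hreg
end
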